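/- arXiv:2010.12103 — 5 statements merged into one kernel-verified Lean document; each statement's English description precedes it below -/
import Mathlib

section
/- Fix a sample S = (s_1,…,s_m) and let δ ∈ (0,1). Let σ be an n×m random matrix whose entries are independent uniform Rademacher (±1) random variables. With probability at least 1 − δ over σ, R̂(F,S) ≤ R̂ⁿ_m(F,S,σ) + 2 ẑ(S) ln(1/δ)/(n m) + sqrt( ( 2 ẑ(S) ln(1/δ)/(n m) )² + 4 ( ẑ(S) R̂ⁿ_m(F,S,σ) + σ̂²_F(S) ) ln(1/δ)/(n m) ). -/
open MeasureTheory

noncomputable section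

/-- Map a Boolean to a `±1` sign: `true ↦ 1`, `false ↦ -1`. -/
def sgnB (x : Bool) : ℝ := if x then 1 else -1

/-- The `n`-Monte-Carlo Empirical Rademacher Average
`R̂ⁿ_m(F,S,σ) = (1/n) Σ_j sup_{f∈F} (1/m) Σ_i σ_{j,i} f(s_i)`. -/
def mcera {X ι : Type*} (f : ι → X → ℝ) (n m : ℕ) (S : Fin m → X)
    (σ : Fin n → Fin m → Bool) : ℝ :=
  (n : ℝ)⁻¹ * ∑ j : Fin n, ⨆ l : ι, (m : ℝ)⁻¹ * ∑ k : Fin m, sgnB (σ j k) * f l (S k)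

/-- Uniform measure on `n × m` sign matrices: the entries are independent
uniform Rademacher (±1) random variables. -/
def radMeasure (n m : ℕ) : Measure (Fin n → Fin m → Bool) :=
  (PMF.uniformOfFintype (Fin n → Fin m → Bool)).toMeasure

/-- The Empirical Rademacher Average `R̂(F,S) = E_σ[R̂ⁿ_m(F,S,σ)]`. -/
def era {X ι : Type*} (f : ι → X → ℝ) (n m : ℕ) (S : Fin m → X) : ℝ :=
  ∫ σ, mcera f n m S σ ∂(radMeasure n m)

/-- The Rademacher Complexity `R(F,m) = E_S[R̂(F,S)]`, `S` being `m` i.i.d. samples. -/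
def rc {X ι : Type*} [MeasurableSpace X] (f : ι → X → ℝ) (n m : ℕ) (μ : Measure X) : ℝ :=
  ∫ S : Fin m → X, era f n m S ∂(Measure.pi fun _ : Fin m => μ)

/-- `ẑ(S) = sup_{f∈F, 1≤i≤m} |f(s_i)|`. -/
def zhat {X ι : Type*} (f : ι → X → ℝ) {m : ℕ} (S : Fin m → X) : ℝ :=
  ⨆ p : ι × Fin m, |f p.1 (S p.2)|

/-- `ν̂_F(S) = (1/m) sup_{f∈F} Σ_i |f(s_i)|`. -/
def nuhat {X ι : Type*} (f : ι → X → ℝ) {m : ℕ} (S : Fin m → X) : ℝ :=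
  (m : ℝ)⁻¹ * ⨆ l : ι, ∑ k : Fin m, |f l (S k)|

/-- The empirical wimpy variance `σ̂²_F(S) = (1/m) sup_{f∈F} Σ_i f(s_i)²`. -/
def sigma2hat {X ι : Type*} (f : ι → X → ℝ) {m : ℕ} (S : Fin m → X) : ℝ :=
  (m : ℝ)⁻¹ * ⨆ l : ι, ∑ k : Fin m, (f l (S k)) ^ 2

/-- The wimpy variance `σ²_F = sup_{f∈F} E_μ[f²]`. -/
def wimpyVar {X ι : Type*} [MeasurableSpace X] (f : ι → X → ℝ) (μ : Measure X) : ℝ :=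
  ⨆ l : ι, ∫ x, (f l x) ^ 2 ∂μ

/-- The positive supremum deviation `SD⁺(F,S) = sup_{f∈F} ((1/m)Σ_i f(s_i) - E_μ[f])`. -/
def sdPlus {X ι : Type*} [MeasurableSpace X] (f : ι → X → ℝ) (μ : Measure X)
    {m : ℕ} (S : Fin m → X) : ℝ :=
  ⨆ l : ι, ((m : ℝ)⁻¹ * ∑ k : Fin m, f l (S k) - ∫ x, f l x ∂μ)

/-- The negative supremum deviation `SD⁻(F,S) = sup_{f∈F} (E_μ[f] - (1/m)Σ_i f(s_i))`. -/
def sdMinus {X ι : Type*} [MeasurableSpace X] (f : ι → X → ℝ) (μ : Measure X)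
    {m : ℕ} (S : Fin m → X) : ℝ :=
  ⨆ l : ι, ((∫ x, f l x ∂μ) - (m : ℝ)⁻¹ * ∑ k : Fin m, f l (S k))

/-- `η_F = sup_{f∈F} E_μ[f] - a`. -/
def etaF {X ι : Type*} [MeasurableSpace X] (f : ι → X → ℝ) (μ : Measure X) (a : ℝ) : ℝ :=
  (⨆ l : ι, ∫ x, f l x ∂μ) - a

/-- `γ_F = b - inf_{f∈F} E_μ[f]`. -/
def gammaF {X ι : Type*} [MeasurableSpace X] (f : ι → X → ℝ) (μ : Measure X) (b : ℝ) : ℝ :=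
  b - ⨅ l : ι, ∫ x, f l x ∂μ

/-- `η̂_F(S) = sup_{f∈F} (1/m) Σ_i f(s_i) - a`. -/
def etahat {X ι : Type*} (f : ι → X → ℝ) {m : ℕ} (S : Fin m → X) (a : ℝ) : ℝ :=
  (⨆ l : ι, (m : ℝ)⁻¹ * ∑ k : Fin m, f l (S k)) - a

/-- `γ̂_F(S) = b - sup_{f∈F} (1/m) Σ_i f(s_i)`. -/
def gammahat {X ι : Type*} (f : ι → X → ℝ) {m : ℕ} (S : Fin m → X) (b : ℝ) : ℝ :=
  b - ⨆ l : ι, (m : ℝ)⁻¹ * ∑ k : Fin m, f l (S k)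

/-- `h(x) = (1+x) ln(1+x) - x`. -/
def hfun (x : ℝ) : ℝ := (1 + x) * Real.log (1 + x) - x

/-- `g(σ) = n m R̂ⁿ_m(F,S,σ) = Σ_j sup_{f∈F} Σ_i σ_{j,i} f(s_i)`. -/
def gup {X ι : Type*} (f : ι → X → ℝ) {n m : ℕ} (S : Fin m → X)
    (σ : Fin n → Fin m → Bool) : ℝ :=
  ∑ j : Fin n, ⨆ l : ι, ∑ k : Fin m, sgnB (σ j k) * f l (S k)

/-- `g_{j,i}(σ)`: infimum over `σ'_{j,i} ∈ {-1,1}` of `g` evaluated at `σ` with its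
`(j,i)` entry replaced by `σ'_{j,i}`. -/
def gji {X ι : Type*} (f : ι → X → ℝ) {n m : ℕ} (S : Fin m → X)
    (σ : Fin n → Fin m → Bool) (j : Fin n) (i : Fin m) : ℝ :=
  min (gup f S (Function.update σ j (Function.update (σ j) i true)))
      (gup f S (Function.update σ j (Function.update (σ j) i false)))

/-- `g(S) = m SD⁺(F,S) = sup_{f∈F} (Σ_i f(s_i) - m E_μ[f])`. -/
def gSDp {X ι : Type*} [MeasurableSpace X] (f : ι → X → ℝ) (μ : Measure X)
    {m : ℕ} (S : Fin m → X) : ℝ :=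
  ⨆ l : ι, (∑ k : Fin m, f l (S k) - m * ∫ x, f l x ∂μ)

/-- `g_i(S) = inf_{s'_i ∈ X} g(s_1,…,s_{i-1},s'_i,s_{i+1},…,s_m)` for `g = m SD⁺`. -/
def gSDpi {X ι : Type*} [MeasurableSpace X] (f : ι → X → ℝ) (μ : Measure X)
    {m : ℕ} (S : Fin m → X) (i : Fin m) : ℝ :=
  ⨅ s' : X, gSDp f μ (Function.update S i s')

/-- `g(S) = m SD⁻(F,S) = sup_{f∈F} (m E_μ[f] - Σ_i f(s_i))`. -/
def gSDm {X ι : Type*} [MeasurableSpace X] (f : ι → X → ℝ) (μ : Measure X)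
    {m : ℕ} (S : Fin m → X) : ℝ :=
  ⨆ l : ι, ((m : ℝ) * (∫ x, f l x ∂μ) - ∑ k : Fin m, f l (S k))

/-- `g_i(S) = inf_{s'_i ∈ X} g(s_1,…,s_{i-1},s'_i,s_{i+1},…,s_m)` for `g = m SD⁻`. -/
def gSDmi {X ι : Type*} [MeasurableSpace X] (f : ι → X → ℝ) (μ : Measure X)
    {m : ℕ} (S : Fin m → X) (i : Fin m) : ℝ :=
  ⨅ s' : X, gSDm f μ (Function.update S i s')

/-- `g(S) = m σ̂²_F(S) = sup_{f∈F} Σ_i f(s_i)²`. -/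
def gWv {X ι : Type*} (f : ι → X → ℝ) {m : ℕ} (S : Fin m → X) : ℝ :=
  ⨆ l : ι, ∑ k : Fin m, (f l (S k)) ^ 2

/-- `g_j(S) = sup_{f∈F} Σ_{i≠j} f(s_i)²`. -/
def gWvj {X ι : Type*} (f : ι → X → ℝ) {m : ℕ} (S : Fin m → X) (j : Fin m) : ℝ :=
  ⨆ l : ι, ∑ k ∈ Finset.univ.erase j, (f l (S k)) ^ 2

/-!
On the cube of sign vectors, `R ρ = sup_f ∑ ρ_k f(s_k)` is weakly self-bounding: flipping one sign
lowers `R` by at most `2 ẑ`, and the squares of these drops add up to at most `4 sup_f ∑ f(s_k)²`.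
Tensorization of entropy turns this into a modified logarithmic Sobolev inequality for `-R`, and
Herbst's argument integrates it to a sub-gamma bound on the cumulant generating function of `-R`.
The `n` rows of the sign matrix are independent, so variance factors add while the scale stays `ẑ`.
With `E` the mean of the row sum `Y ≥ 0`, a downward deviation of `Y` cannot exceed `E`, so the
denominator `2 (ν + ẑ t)` of the sub-gamma tail is at most `2 (ν + ẑ E)`. This gives
`E ≤ Y + √(2 (ν + ẑ E) L)` with probability at least `1 - exp (-L)`, a quadratic inequality in `E`.
-/

open Function ProbabilityTheory
open scoped BigOperators

section FiniteProduct

variable {ι : Type*} [Fintype ι] [DecidableEq ι] {Ω : ι → Type*} [∀ i, Fintype (Ω i)]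
  {F : (∀ i, Ω i) → ℝ}

/-- The average of `F` over the coordinates in `s` with the other coordinates held fixed, that is,
the conditional expectation of `F` given the coordinates outside `s`. -/
def averageOver (s : Finset ι) (F : (∀ i, Ω i) → ℝ) (σ : ∀ i, Ω i) : ℝ :=
  𝔼 τ, F (s.piecewise τ σ)

lemma averageOver_univ (σ : ∀ i, Ω i) : averageOver Finset.univ F σ = 𝔼 τ, F τ := by
  simp only [averageOver, Finset.piecewise_univ]

variable [∀ i, Nonempty (Ω i)]

lemma averageOver_empty (σ : ∀ i, Ω i) : averageOver ∅ F σ = F σ := by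
  simp only [averageOver, Finset.piecewise_empty, Fintype.expect_const]

lemma averageOver_pos (hF : ∀ σ, 0 < F σ) (s : Finset ι) (σ : ∀ i, Ω i) :
    0 < averageOver s F σ :=
  Finset.expect_pos (fun _ _ => hF _) Finset.univ_nonempty

lemma expect_expect_update (i : ι) (G : (∀ j, Ω j) → ℝ) :
    𝔼 σ, 𝔼 x, G (update σ i x) = 𝔼 σ, G σ := by
  let swap : Equiv.Perm ((∀ j, Ω j) × Ω i) :=
    Involutive.toPerm (fun p => (update p.1 i p.2, p.1 i)) fun p => by simp
  calc 𝔼 σ, 𝔼 x, G (update σ i x)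
      = 𝔼 p : (∀ j, Ω j) × Ω i, G (update p.1 i p.2) :=
        (Finset.expect_product Finset.univ Finset.univ fun p => G (update p.1 i p.2)).symm
    _ = 𝔼 p : (∀ j, Ω j) × Ω i, G p.1 := Fintype.expect_equiv swap _ _ fun _ => rfl
    _ = 𝔼 σ, 𝔼 _x : Ω i, G σ :=
        Finset.expect_product Finset.univ Finset.univ fun p : (∀ j, Ω j) × Ω i => G p.1
    _ = 𝔼 σ, G σ := by simp only [Fintype.expect_const]

lemma expect_averageOver_update {s : Finset ι} {i : ι} (hi : i ∉ s) (σ : ∀ i, Ω i) :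
    𝔼 x, averageOver s F (update σ i x) = averageOver (insert i s) F σ := by
  simp only [averageOver]
  rw [Finset.expect_comm, ← expect_expect_update i fun τ => F ((insert i s).piecewise τ σ)]
  refine Finset.expect_congr rfl fun τ _ => Finset.expect_congr rfl fun x _ => ?_
  rw [Finset.piecewise_insert, update_self, Finset.update_piecewise_of_notMem _ _ _ hi]
  congr 1
  exact s.piecewise_congr
    (fun j hj => (update_of_ne (ne_of_mem_of_not_mem hj hi) _ _).symm) fun _ _ => rfl

lemma averageOver_insert_update {s : Finset ι} {i : ι} (hi : i ∉ s) (σ : ∀ i, Ω i) (x : Ω i) :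
    averageOver (insert i s) F (update σ i x) = averageOver (insert i s) F σ := by
  simp only [← expect_averageOver_update hi, update_idem]

end FiniteProduct

section Entropy

variable {Ω : Type*} [Fintype Ω]

/-- The entropy `𝔼[F log F] - 𝔼[F] log 𝔼[F]` of a function on a finite type carrying the uniform
probability. -/
def entropy (F : Ω → ℝ) : ℝ :=
  𝔼 ω, F ω * Real.log (F ω) - (𝔼 ω, F ω) * Real.log (𝔼 ω, F ω)

lemma expect_mul_log_sub_log_expect (F : Ω → ℝ) :
    𝔼 ω, F ω * (Real.log (F ω) - Real.log (𝔼 ω, F ω)) = entropy F := by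
  simp only [entropy, mul_sub, Finset.expect_sub_distrib, Finset.expect_mul]

variable [Nonempty Ω] {F : Ω → ℝ}

lemma expect_mul_log_sub_log_le_entropy {G : Ω → ℝ} (hF : ∀ ω, 0 < F ω) (hG : ∀ ω, 0 < G ω) :
    𝔼 ω, F ω * (Real.log (G ω) - Real.log (𝔼 ω, G ω)) ≤ entropy F := by
  have hEF : 0 < 𝔼 ω, F ω := Finset.expect_pos (fun ω _ => hF ω) Finset.univ_nonempty
  have hEG : 0 < 𝔼 ω, G ω := Finset.expect_pos (fun ω _ => hG ω) Finset.univ_nonempty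
  set c := (𝔼 ω, F ω) / 𝔼 ω, G ω with hc
  have pointwise (ω : Ω) : F ω * (Real.log (G ω) - Real.log (𝔼 ω, G ω)) ≤
      F ω * (Real.log (F ω) - Real.log (𝔼 ω, F ω)) + (G ω * c - F ω) := by
    have h := Real.log_le_sub_one_of_pos (x := G ω * c / F ω)
      (by have := hF ω; have := hG ω; positivity)
    rw [Real.log_div (by have := hG ω; positivity) (hF ω).ne', hc,
      Real.log_mul (hG ω).ne' (by positivity), Real.log_div hEF.ne' hEG.ne', ← hc] at h
    have h' := mul_le_mul_of_nonneg_left h (hF ω).le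
    rw [mul_sub_one, mul_div_cancel₀ _ (hF ω).ne'] at h'
    linarith
  calc 𝔼 ω, F ω * (Real.log (G ω) - Real.log (𝔼 ω, G ω))
      ≤ 𝔼 ω, (F ω * (Real.log (F ω) - Real.log (𝔼 ω, F ω)) + (G ω * c - F ω)) :=
        Finset.expect_le_expect fun ω _ => pointwise ω
    _ = entropy F := by
        rw [Finset.expect_add_distrib, Finset.expect_sub_distrib, expect_mul_log_sub_log_expect,
          ← Finset.expect_mul, hc, mul_div_cancel₀ _ hEG.ne', sub_self, add_zero]

lemma entropy_le_expect_of_pos {c : ℝ} (hF : ∀ ω, 0 < F ω) (hc : 0 < c) :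
    entropy F ≤ 𝔼 ω, (F ω * (Real.log (F ω) - Real.log c) - F ω + c) := by
  have hEF : 0 < 𝔼 ω, F ω := Finset.expect_pos (fun ω _ => hF ω) Finset.univ_nonempty
  have h := mul_le_mul_of_nonneg_left (Real.log_le_sub_one_of_pos (div_pos hc hEF)) hEF.le
  rw [Real.log_div hc.ne' hEF.ne', mul_sub_one, mul_div_cancel₀ _ hEF.ne'] at h
  simp only [entropy, mul_sub, Finset.expect_add_distrib, Finset.expect_sub_distrib,
    ← Finset.expect_mul, Fintype.expect_const]
  linarith

end Entropy

section Tensorization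

variable {ι : Type*} [Fintype ι] [DecidableEq ι] {Ω : ι → Type*} [∀ i, Fintype (Ω i)]
  [∀ i, Nonempty (Ω i)] {F : (∀ i, Ω i) → ℝ}

lemma expect_mul_log_averageOver_sub_log_averageOver_insert_le (hF : ∀ σ, 0 < F σ)
    {s : Finset ι} {i : ι} (hi : i ∉ s) :
    𝔼 σ, F σ * (Real.log (averageOver s F σ) - Real.log (averageOver (insert i s) F σ)) ≤
      𝔼 σ, entropy fun x => F (update σ i x) := by
  rw [← expect_expect_update i]
  refine Finset.expect_le_expect fun σ _ => ?_
  simp only [averageOver_insert_update hi]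
  rw [← expect_averageOver_update hi]
  exact expect_mul_log_sub_log_le_entropy (fun _ => hF _) fun _ => averageOver_pos hF s _

lemma expect_mul_log_sub_log_averageOver_le (hF : ∀ σ, 0 < F σ) (s : Finset ι) :
    𝔼 σ, F σ * (Real.log (F σ) - Real.log (averageOver s F σ)) ≤
      ∑ i ∈ s, 𝔼 σ, entropy fun x => F (update σ i x) := by
  induction s using Finset.induction_on with
  | empty => simp [averageOver_empty]
  | insert i s hi ih =>
    have step := expect_mul_log_averageOver_sub_log_averageOver_insert_le hF hi
    rw [Finset.sum_insert hi, add_comm]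
    refine le_trans (le_of_eq ?_) (add_le_add ih step)
    rw [← Finset.expect_add_distrib]
    exact Finset.expect_congr rfl fun σ _ => by ring

theorem entropy_le_sum_expect_entropy_update (hF : ∀ σ, 0 < F σ) :
    entropy F ≤ ∑ i, 𝔼 σ, entropy fun x => F (update σ i x) := by
  have h := expect_mul_log_sub_log_averageOver_le hF Finset.univ
  simpa only [averageOver_univ, expect_mul_log_sub_log_expect] using h

end Tensorization

section BooleanCube

lemma mul_sq_sub_one_sub_sq_le {d : ℝ} (hd : d < 1) (u : ℝ) :
    d * (u ^ 2 - 1) - (u - 1) ^ 2 ≤ d ^ 2 / (1 - d) := by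
  rw [le_div_iff₀ (by linarith)]
  linear_combination sq_nonneg ((1 - d) * u - 1)

lemma expect_bool (H : Bool → ℝ) (b : Bool) : 𝔼 x, H x = (H b + H !b) / 2 := by
  rw [Fintype.expect_eq_sum_div_card, Fintype.sum_bool, Fintype.card_bool]
  cases b <;> simp [add_comm]

-- The entropy is compared with the constant `exp (G b + d)`, the geometric mean of `exp ∘ G`.
lemma entropy_exp_bool_le {G : Bool → ℝ} {r : ℝ} (hr : r < 1) (hG : ∀ b, G (!b) - G b ≤ 2 * r) :
    entropy (fun b => Real.exp (G b)) ≤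
      𝔼 b, Real.exp (G b) * max (G (!b) - G b) 0 ^ 2 / (4 * (1 - r)) := by
  obtain ⟨b, hb⟩ : ∃ b, G b ≤ G !b := by
    rcases le_total (G true) (G false) with h | h
    · exact ⟨true, h⟩
    · exact ⟨false, h⟩
  set d := (G (!b) - G b) / 2 with hd
  set u := Real.exp d
  have hdr : d ≤ r := by linarith [hG b]
  have exp_not : Real.exp (G !b) = Real.exp (G b) * u ^ 2 := by
    rw [← Real.exp_nat_mul, ← Real.exp_add, hd]
    congr 1
    push_cast
    ring
  have exp_mean : Real.exp (G b + d) = Real.exp (G b) * u := Real.exp_add _ _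
  calc entropy (fun b => Real.exp (G b))
      ≤ 𝔼 x, (Real.exp (G x) * (Real.log (Real.exp (G x)) - Real.log (Real.exp (G b + d)))
          - Real.exp (G x) + Real.exp (G b + d)) :=
        entropy_le_expect_of_pos (fun _ => Real.exp_pos _) (Real.exp_pos _)
    _ = Real.exp (G b) * (d * (u ^ 2 - 1) - (u - 1) ^ 2) / 2 := by
        rw [expect_bool _ b]
        have h : G (!b) = G b + 2 * d := by rw [hd]; ring
        simp only [Real.log_exp]
        rw [exp_not, exp_mean]
        linear_combination Real.exp (G b) * u ^ 2 / 2 * h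
    _ ≤ Real.exp (G b) * (d ^ 2 / (1 - r)) / 2 := by
        gcongr
        refine (mul_sq_sub_one_sub_sq_le (hdr.trans_lt hr) u).trans ?_
        gcongr
    _ = 𝔼 b, Real.exp (G b) * max (G (!b) - G b) 0 ^ 2 / (4 * (1 - r)) := by
        rw [expect_bool _ b, Bool.not_not, max_eq_left (sub_nonneg.2 hb),
          max_eq_right (sub_nonpos.2 hb), hd]
        field_simp
        ring

variable {κ : Type*} [DecidableEq κ]

/-- The sign vector `ρ` with its `i`-th entry flipped, so that the pairs `ρ`, `flipAt ρ i` are the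
edges of the cube `κ → Bool` in direction `i`. -/
def flipAt (ρ : κ → Bool) (i : κ) : κ → Bool := update ρ i !(ρ i)

lemma flipAt_update (ρ : κ → Bool) (i : κ) (b : Bool) :
    flipAt (update ρ i b) i = update ρ i !b := by
  simp only [flipAt, update_self, update_idem]

lemma entropy_exp_mul_update_le {X : (κ → Bool) → ℝ} {c : ℝ} {i : κ}
    (hc : ∀ ρ, X (flipAt ρ i) - X ρ ≤ 2 * c) {s : ℝ} (hs : 0 ≤ s) (hsc : c * s < 1)
    (ρ : κ → Bool) :
    entropy (fun b => Real.exp (s * X (update ρ i b))) ≤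
      𝔼 b, Real.exp (s * X (update ρ i b)) *
        (s * max (X (flipAt (update ρ i b) i) - X (update ρ i b)) 0) ^ 2 / (4 * (1 - c * s)) := by
  have scale (x y : ℝ) : max (s * x - s * y) 0 = s * max (x - y) 0 := by
    rw [mul_max_of_nonneg _ _ hs, mul_sub, mul_zero]
  have jump (b : Bool) : s * X (update ρ i !b) - s * X (update ρ i b) ≤ 2 * (c * s) := by
    have h := mul_le_mul_of_nonneg_left (hc (update ρ i b)) hs
    rw [flipAt_update] at h
    linarith
  refine (entropy_exp_bool_le hsc jump).trans_eq ?_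
  simp only [flipAt_update, scale]

variable [Fintype κ]

theorem entropy_exp_mul_le {X : (κ → Bool) → ℝ} {ν c : ℝ}
    (hc : ∀ ρ i, X (flipAt ρ i) - X ρ ≤ 2 * c)
    (hν : ∀ ρ, ∑ i, max (X (flipAt ρ i) - X ρ) 0 ^ 2 ≤ 2 * ν)
    {s : ℝ} (hs : 0 ≤ s) (hsc : c * s < 1) :
    entropy (fun ρ => Real.exp (s * X ρ)) ≤
      ν * s ^ 2 / (2 * (1 - c * s)) * 𝔼 ρ, Real.exp (s * X ρ) := by
  let Y (i : κ) (ρ : κ → Bool) : ℝ :=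
    Real.exp (s * X ρ) * (s * max (X (flipAt ρ i) - X ρ) 0) ^ 2 / (4 * (1 - c * s))
  calc entropy (fun ρ => Real.exp (s * X ρ))
      ≤ ∑ i, 𝔼 ρ, entropy fun b => Real.exp (s * X (update ρ i b)) :=
        entropy_le_sum_expect_entropy_update fun _ => Real.exp_pos _
    _ ≤ ∑ i, 𝔼 ρ, 𝔼 b, Y i (update ρ i b) :=
        Finset.sum_le_sum fun i _ => Finset.expect_le_expect fun ρ _ =>
          entropy_exp_mul_update_le (hc · i) hs hsc ρ
    _ = ∑ i, 𝔼 ρ, Y i ρ :=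
        Finset.sum_congr rfl fun i _ => expect_expect_update i (Y i)
    _ = 𝔼 ρ, s ^ 2 / (4 * (1 - c * s)) *
          (∑ i, max (X (flipAt ρ i) - X ρ) 0 ^ 2) * Real.exp (s * X ρ) := by
        rw [← Finset.expect_sum_comm]
        refine Finset.expect_congr rfl fun ρ _ => ?_
        rw [Finset.mul_sum, Finset.sum_mul]
        exact Finset.sum_congr rfl fun i _ => by ring
    _ ≤ 𝔼 ρ, s ^ 2 / (4 * (1 - c * s)) * (2 * ν) * Real.exp (s * X ρ) := by
        have : 0 < 1 - c * s := by linarith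
        refine Finset.expect_le_expect fun ρ _ => ?_
        gcongr
        exact hν ρ
    _ = ν * s ^ 2 / (2 * (1 - c * s)) * 𝔼 ρ, Real.exp (s * X ρ) := by
        rw [← Finset.mul_expect]
        congr 1
        field_simp
        ring

end BooleanCube

section SubGamma

lemma le_mul_deriv_zero_of_mul_deriv_le {H : ℝ → ℝ} {b : ℝ} (hb : 0 < b) (h0 : H 0 = 0)
    (hd : ∀ s ∈ Set.Icc 0 b, DifferentiableAt ℝ H s)
    (hle : ∀ s ∈ Set.Ioo 0 b, s * deriv H s ≤ H s) : H b ≤ b * deriv H 0 := by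
  have hasDeriv (s : ℝ) (hs : s ∈ Set.Ioo 0 b) :
      HasDerivAt (dslope H 0) ((deriv H s * s - H s) / s ^ 2) s := by
    have h := (hd s (Set.Ioo_subset_Icc_self hs)).hasDerivAt.div (hasDerivAt_id s) hs.1.ne'
    refine (h.congr_of_eventuallyEq ?_).congr_deriv (by simp only [id_eq, mul_one])
    filter_upwards [dslope_eventuallyEq_slope_of_ne H hs.1.ne'] with t ht
    simp only [ht, slope_def_field, h0, sub_zero, Pi.div_apply, id_eq]
  have antitone : AntitoneOn (dslope H 0) (Set.Icc 0 b) := by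
    refine antitoneOn_of_deriv_nonpos (convex_Icc 0 b) (fun s hs => ?_) ?_ ?_
    · rcases eq_or_ne s 0 with rfl | hs0
      · exact (continuousAt_dslope_same.2 (hd 0 hs)).continuousWithinAt
      · exact ((continuousAt_dslope_of_ne hs0).2 (hd s hs).continuousAt).continuousWithinAt
    · rw [interior_Icc]
      exact fun s hs => (hasDeriv s hs).differentiableAt.differentiableWithinAt
    · rw [interior_Icc]
      intro s hs
      rw [(hasDeriv s hs).deriv]
      exact div_nonpos_of_nonpos_of_nonneg (by linarith [hle s hs]) (sq_nonneg s)
  have h := antitone (Set.left_mem_Icc.2 hb.le) (Set.right_mem_Icc.2 hb.le) hb.le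
  rwa [dslope_same, dslope_of_ne _ hb.ne', slope_def_field, h0, sub_zero, sub_zero, div_le_iff₀' hb]
    at h

lemma hasDerivAt_sq_div_one_sub_mul (ν : ℝ) {c s : ℝ} (hs : c * s < 1) :
    HasDerivAt (fun t => ν * t ^ 2 / (2 * (1 - c * t)))
      (ν * s * (2 - c * s) / (2 * (1 - c * s) ^ 2)) s := by
  have hs' : 1 - c * s ≠ 0 := by linarith
  have h := (((hasDerivAt_id s).pow 2).const_mul ν).div
    ((((hasDerivAt_id s).const_mul c).const_sub 1).const_mul 2) (mul_ne_zero two_ne_zero hs')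
  refine h.congr_deriv ?_
  simp only [id_eq, Pi.pow_apply]
  field_simp
  ring

variable {Ω : Type*} {mΩ : MeasurableSpace Ω} {X : Ω → ℝ} {ν c : ℝ} {P : Measure Ω}

/-- `X` has a sub-gamma right tail with variance factor `ν` and scale `c`: on `[0, 1 / c)` its
centred cumulant generating function is at most `ν s² / (2 (1 - c s))`. -/
structure HasSubGammaCGF (X : Ω → ℝ) (ν c : ℝ) (P : Measure Ω) : Prop where
  integrable_exp_mul (s : ℝ) (hs : 0 ≤ s) (hcs : c * s < 1) :
    Integrable (fun ω => Real.exp (s * X ω)) P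
  cgf_le (s : ℝ) (hs : 0 ≤ s) (hcs : c * s < 1) :
    cgf X P s ≤ s * P[X] + ν * s ^ 2 / (2 * (1 - c * s))

namespace HasSubGammaCGF

-- Herbst's argument: with `H s = cgf X P s - ν s² / (2 (1 - c s))` the hypothesis says
-- `s * H' s ≤ H s`.
theorem of_mul_deriv_cgf_sub_cgf_le [IsProbabilityMeasure P]
    (hX : integrableExpSet X P = Set.univ) (hc : 0 ≤ c)
    (h : ∀ s, 0 < s → c * s < 1 →
      s * deriv (cgf X P) s - cgf X P s ≤ ν * s ^ 2 / (2 * (1 - c * s) ^ 2)) :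
    HasSubGammaCGF X ν c P where
  integrable_exp_mul s _ _ := by
    have : s ∈ integrableExpSet X P := hX ▸ Set.mem_univ s
    exact this
  cgf_le b hb hcb := by
    have interior_eq (s : ℝ) : s ∈ interior (integrableExpSet X P) := by simp [hX]
    rcases hb.eq_or_lt with rfl | hb
    · simp
    have lt_one (s : ℝ) (hs : s ≤ b) : c * s < 1 := by
      linarith [mul_le_mul_of_nonneg_left hs hc]
    have hasDeriv (s : ℝ) (hs : s ≤ b) :
        HasDerivAt (fun t => cgf X P t - ν * t ^ 2 / (2 * (1 - c * t)))
          (deriv (cgf X P) s - ν * s * (2 - c * s) / (2 * (1 - c * s) ^ 2)) s :=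
      (analyticAt_cgf (interior_eq s)).differentiableAt.hasDerivAt.sub
        (hasDerivAt_sq_div_one_sub_mul ν (lt_one s hs))
    have herbst := le_mul_deriv_zero_of_mul_deriv_le hb (by simp)
      (fun s hs => (hasDeriv s hs.2).differentiableAt) fun s hs => by
        rw [(hasDeriv s hs.2.le).deriv]
        have : 1 - c * s ≠ 0 := by linarith [lt_one s hs.2.le]
        have gamma : s * (ν * s * (2 - c * s) / (2 * (1 - c * s) ^ 2)) -
            ν * s ^ 2 / (2 * (1 - c * s)) = ν * s ^ 2 / (2 * (1 - c * s) ^ 2) := by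
          field_simp
          ring
        linarith [h s hs.1 (lt_one s hs.2.le)]
    rw [(hasDeriv 0 hb.le).deriv, deriv_cgf_zero (interior_eq 0)] at herbst
    simp only [mul_zero, zero_mul, zero_div, sub_zero, probReal_univ, div_one] at herbst
    linarith

theorem sum {ι : Type*} [Fintype ι] {X : ι → Ω → ℝ} {ν : ι → ℝ} (hindep : iIndepFun X P)
    (hmeas : ∀ i, Measurable (X i)) (hint : ∀ i, Integrable (X i) P)
    (h : ∀ i, HasSubGammaCGF (X i) (ν i) c P) :
    HasSubGammaCGF (∑ i, X i) (∑ i, ν i) c P where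
  integrable_exp_mul s hs hcs := by
    have := hindep.isProbabilityMeasure
    exact hindep.integrable_exp_mul_sum hmeas fun i _ => (h i).integrable_exp_mul s hs hcs
  cgf_le s hs hcs := by
    rw [hindep.cgf_sum hmeas fun i _ => (h i).integrable_exp_mul s hs hcs]
    simp only [Finset.sum_apply]
    rw [integral_finsetSum _ fun i _ => hint i, Finset.mul_sum, Finset.sum_mul, Finset.sum_div,
      ← Finset.sum_add_distrib]
    exact Finset.sum_le_sum fun i _ => (h i).cgf_le s hs hcs

theorem comp_measurePreserving {Ω' : Type*} {mΩ' : MeasurableSpace Ω'} {P' : Measure Ω'}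
    {f : Ω' → Ω} (h : HasSubGammaCGF X ν c P) (hX : AEStronglyMeasurable X P)
    (hf : MeasurePreserving f P' P) : HasSubGammaCGF (X ∘ f) ν c P' where
  integrable_exp_mul s hs hcs := hf.integrable_comp_of_integrable (h.integrable_exp_mul s hs hcs)
  cgf_le s hs hcs := by
    rw [← hf.map_eq] at h hX
    have mgf_eq : mgf X (P'.map f) s = mgf (X ∘ f) P' s :=
      mgf_map hf.measurable.aemeasurable (by fun_prop)
    have mean_eq : ∫ ω, X ω ∂P'.map f = ∫ ω, (X ∘ f) ω ∂P' :=
      integral_map hf.measurable.aemeasurable hX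
    simpa only [cgf, mgf_eq, mean_eq] using h.cgf_le s hs hcs

theorem sum_eval [IsProbabilityMeasure P] (h : HasSubGammaCGF X ν c P) (hX : Measurable X)
    (hint : Integrable X P) (κ : Type*) [Fintype κ] :
    HasSubGammaCGF (fun σ : κ → Ω => ∑ j, X (σ j)) (Fintype.card κ * ν) c
      (Measure.pi fun _ => P) := by
  have preserving (j : κ) := measurePreserving_eval (fun _ : κ => P) j
  have hsum := sum (X := fun (j : κ) (σ : κ → Ω) => X (σ j)) (ν := fun _ => ν)
    (iIndepFun_pi fun _ => hX.aemeasurable) (fun j => hX.comp (measurable_pi_apply j))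
    (fun j => (preserving j).integrable_comp_of_integrable hint)
    fun j => h.comp_measurePreserving hX.aestronglyMeasurable (preserving j)
  simpa only [Finset.sum_fn, Finset.sum_const, Finset.card_univ, nsmul_eq_mul] using hsum

theorem measureReal_integral_add_le [IsFiniteMeasure P] (h : HasSubGammaCGF X ν c P) (hν : 0 < ν)
    (hc : 0 ≤ c) {t : ℝ} (ht : 0 ≤ t) :
    P.real {ω | P[X] + t ≤ X ω} ≤ Real.exp (-(t ^ 2 / (2 * (ν + c * t)))) := by
  set s := t / (ν + c * t) with hs
  have hs0 : 0 ≤ s := by positivity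
  have one_sub : 1 - c * s = ν / (ν + c * t) := by rw [hs]; field_simp; ring
  have hcs : c * s < 1 := by
    have : 0 < ν / (ν + c * t) := by positivity
    linarith
  refine (measure_ge_le_exp_cgf _ hs0 (h.integrable_exp_mul s hs0 hcs)).trans
    (Real.exp_le_exp.2 ?_)
  calc -s * (P[X] + t) + cgf X P s
      ≤ -s * (P[X] + t) + (s * P[X] + ν * s ^ 2 / (2 * (1 - c * s))) := by
        gcongr
        exact h.cgf_le s hs0 hcs
    _ = -(t ^ 2 / (2 * (ν + c * t))) := by
        rw [one_sub, hs]
        field_simp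
        ring

theorem one_sub_exp_neg_le_measureReal_integral_le [IsProbabilityMeasure P] {Y : Ω → ℝ}
    (h : HasSubGammaCGF (-Y) ν c P) (hν : 0 < ν) (hc : 0 ≤ c) (hY : 0 ≤ Y) {L : ℝ} (hL : 0 ≤ L) :
    1 - Real.exp (-L) ≤ P.real {ω | P[Y] ≤ Y ω + √(2 * (ν + c * P[Y]) * L)} := by
  have hE : 0 ≤ P[Y] := integral_nonneg hY
  set t := √(2 * (ν + c * P[Y]) * L)
  have t_sq : t ^ 2 = 2 * (ν + c * P[Y]) * L := Real.sq_sqrt (by positivity)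
  have ht0 : 0 ≤ t := Real.sqrt_nonneg _
  rcases lt_or_ge P[Y] t with htE | htE
  · have : {ω | P[Y] ≤ Y ω + t} = Set.univ :=
      Set.eq_univ_of_forall fun ω => htE.le.trans (le_add_of_nonneg_left (hY ω))
    rw [this, probReal_univ]
    linarith [Real.exp_pos (-L)]
  have mean_neg : P[-Y] = -P[Y] := integral_neg Y
  have deviation : P.real {ω | P[-Y] + t ≤ (-Y) ω} ≤ Real.exp (-L) := by
    refine (h.measureReal_integral_add_le hν hc ht0).trans (Real.exp_le_exp.2 (neg_le_neg ?_))
    rw [le_div_iff₀ (by positivity), t_sq]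
    nlinarith [mul_le_mul_of_nonneg_left (mul_le_mul_of_nonneg_left htE hc) hL]
  have cover : Set.univ ⊆ {ω | P[Y] ≤ Y ω + t} ∪ {ω | P[-Y] + t ≤ (-Y) ω} := by
    refine fun ω _ => (le_total (∫ x, Y x ∂P) (Y ω + t)).imp_right fun hω => ?_
    change P[-Y] + t ≤ -Y ω
    linarith
  have total := (measureReal_mono (μ := P) cover).trans (measureReal_union_le _ _)
  rw [probReal_univ] at total
  linarith

end HasSubGammaCGF

end SubGamma

section UniformMeasure

/-- The uniform probability measure on a nonempty finite type. -/
abbrev uniformMeasure (Ω : Type*) [Fintype Ω] [Nonempty Ω] [MeasurableSpace Ω] : Measure Ω :=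
  (PMF.uniformOfFintype Ω).toMeasure

variable {Ω : Type*} [Fintype Ω] [Nonempty Ω] [MeasurableSpace Ω] [DiscreteMeasurableSpace Ω]

lemma integral_uniformMeasure (Y : Ω → ℝ) : ∫ ω, Y ω ∂uniformMeasure Ω = 𝔼 ω, Y ω := by
  simp only [PMF.integral_eq_sum, PMF.uniformOfFintype_apply, ENNReal.toReal_inv,
    ENNReal.toReal_natCast, smul_eq_mul]
  rw [← Finset.mul_sum, Fintype.expect_eq_sum_div_card, inv_mul_eq_div]

lemma uniformMeasure_pi (κ : Type*) [Fintype κ] [DecidableEq κ] :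
    uniformMeasure (κ → Ω) = Measure.pi fun _ => uniformMeasure Ω := by
  refine Measure.ext_of_singleton fun σ => ?_
  rw [Measure.pi_singleton]
  simp only [PMF.toMeasure_apply_singleton _ _ (measurableSet_singleton _),
    PMF.uniformOfFintype_apply, Finset.prod_const, Finset.card_univ, Fintype.card_fun,
    Nat.cast_pow, ENNReal.inv_pow]

lemma entropy_exp_mul_eq (X : Ω → ℝ) (s : ℝ) :
    entropy (fun ω => Real.exp (s * X ω)) = (𝔼 ω, Real.exp (s * X ω)) *
      (s * deriv (cgf X (uniformMeasure Ω)) s - cgf X (uniformMeasure Ω) s) := by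
  have : 0 < 𝔼 ω, Real.exp (s * X ω) :=
    Finset.expect_pos (fun _ _ => Real.exp_pos _) Finset.univ_nonempty
  have mem_interior : s ∈ interior (integrableExpSet X (uniformMeasure Ω)) := by
    have : integrableExpSet X (uniformMeasure Ω) = Set.univ :=
      Set.eq_univ_of_forall fun _ => Integrable.of_finite
    rw [this, interior_univ]
    exact Set.mem_univ s
  have hcomm : 𝔼 ω, Real.exp (s * X ω) * (s * X ω) = s * 𝔼 ω, X ω * Real.exp (s * X ω) := by
    rw [Finset.mul_expect]
    exact Finset.expect_congr rfl fun ω _ => by ring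
  rw [deriv_cgf mem_interior, cgf, mgf, integral_uniformMeasure, integral_uniformMeasure, entropy]
  simp only [Real.log_exp, hcomm]
  field_simp

theorem HasSubGammaCGF.of_entropy_exp_mul_le {X : Ω → ℝ} {ν c : ℝ} (hν : 0 ≤ ν) (hc : 0 ≤ c)
    (h : ∀ s, 0 ≤ s → c * s < 1 → entropy (fun ω => Real.exp (s * X ω)) ≤
      ν * s ^ 2 / (2 * (1 - c * s)) * 𝔼 ω, Real.exp (s * X ω)) :
    HasSubGammaCGF X ν c (uniformMeasure Ω) := by
  refine .of_mul_deriv_cgf_sub_cgf_le (Set.eq_univ_of_forall fun _ => Integrable.of_finite) hc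
    fun s hs hcs => ?_
  have hpos : 0 < 𝔼 ω, Real.exp (s * X ω) :=
    Finset.expect_pos (fun _ _ => Real.exp_pos _) Finset.univ_nonempty
  have hent := h s hs.le hcs
  rw [entropy_exp_mul_eq, mul_comm, mul_le_mul_iff_left₀ hpos] at hent
  have hcs' : 0 < 1 - c * s := by linarith
  refine hent.trans ?_
  gcongr
  exact pow_le_of_le_one hcs'.le (by linarith [mul_nonneg hc hs.le]) two_ne_zero

end UniformMeasure

section BooleanCubeSubGamma

variable {κ : Type*} [Fintype κ] [DecidableEq κ] {X : (κ → Bool) → ℝ} {ν c : ℝ}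

theorem hasSubGammaCGF_of_sum_sq_flipAt_le (hc0 : 0 ≤ c)
    (hc : ∀ ρ i, X (flipAt ρ i) - X ρ ≤ 2 * c)
    (hν : ∀ ρ, ∑ i, max (X (flipAt ρ i) - X ρ) 0 ^ 2 ≤ 2 * ν) :
    HasSubGammaCGF X ν c (uniformMeasure (κ → Bool)) := by
  have hν0 : 0 ≤ 2 * ν := (Finset.sum_nonneg fun _ _ => sq_nonneg _).trans (hν fun _ => true)
  exact .of_entropy_exp_mul_le (by linarith) hc0 fun _ hs hcs => entropy_exp_mul_le hc hν hs hcs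

end BooleanCubeSubGamma

section RademacherSup

lemma abs_sgnB (b : Bool) : |sgnB b| = 1 := by cases b <;> simp [sgnB]

lemma sgnB_not (b : Bool) : sgnB (!b) = -sgnB b := by cases b <;> simp [sgnB]

variable {ι κ : Type*} [Fintype κ]

/-- The supremum over a family of vectors `g l` of their inner products with the sign vector `ρ`. -/
def rademacherSup (g : ι → κ → ℝ) (ρ : κ → Bool) : ℝ :=
  ⨆ l, ∑ k, sgnB (ρ k) * g l k

variable {g : ι → κ → ℝ} {z W : ℝ}

lemma bddAbove_range_sum_sgnB_mul (hz : ∀ l k, |g l k| ≤ z) (ρ : κ → Bool) :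
    BddAbove (Set.range fun l => ∑ k, sgnB (ρ k) * g l k) := by
  refine ⟨∑ _k : κ, z, ?_⟩
  rintro _ ⟨l, rfl⟩
  refine Finset.sum_le_sum fun k _ => (le_abs_self _).trans ?_
  rw [abs_mul, abs_sgnB, one_mul]
  exact hz l k

lemma rademacherSup_nonneg (hz : ∀ l k, |g l k| ≤ z) (hzero : ∃ l, ∀ k, g l k = 0)
    (ρ : κ → Bool) : 0 ≤ rademacherSup g ρ := by
  obtain ⟨l, hl⟩ := hzero
  refine le_ciSup_of_le (bddAbove_range_sum_sgnB_mul hz ρ) l ?_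
  simp only [hl, mul_zero, Finset.sum_const_zero, le_refl]

variable [DecidableEq κ]

lemma sum_sgnB_flipAt_mul (v : κ → ℝ) (ρ : κ → Bool) (i : κ) :
    ∑ k, sgnB (ρ k) * v k = ∑ k, sgnB (flipAt ρ i k) * v k + 2 * (sgnB (ρ i) * v i) := by
  have diagonal : flipAt ρ i i = !ρ i := update_self ..
  have off_diagonal : ∑ k ∈ Finset.univ.erase i, sgnB (flipAt ρ i k) * v k =
      ∑ k ∈ Finset.univ.erase i, sgnB (ρ k) * v k :=
    Finset.sum_congr rfl fun k hk => by rw [flipAt, update_of_ne (Finset.ne_of_mem_erase hk)]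
  rw [← Finset.add_sum_erase _ _ (Finset.mem_univ i),
    ← Finset.add_sum_erase _ _ (Finset.mem_univ i), diagonal, off_diagonal, sgnB_not]
  ring

lemma sum_sgnB_mul_le_rademacherSup_flipAt_add (hz : ∀ l k, |g l k| ≤ z) (ρ : κ → Bool) (i : κ)
    (l : ι) : ∑ k, sgnB (ρ k) * g l k ≤ rademacherSup g (flipAt ρ i) + 2 * |g l i| := by
  rw [sum_sgnB_flipAt_mul (g l) ρ i]
  refine add_le_add (le_ciSup (bddAbove_range_sum_sgnB_mul hz _) l) ?_
  gcongr
  exact (le_abs_self _).trans_eq (by rw [abs_mul, abs_sgnB, one_mul])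

variable [Nonempty ι]

lemma rademacherSup_sub_flipAt_le (hz : ∀ l k, |g l k| ≤ z) (ρ : κ → Bool) (i : κ) :
    rademacherSup g ρ - rademacherSup g (flipAt ρ i) ≤ 2 * z := by
  rw [sub_le_iff_le_add']
  refine ciSup_le fun l => (sum_sgnB_mul_le_rademacherSup_flipAt_add hz ρ i l).trans ?_
  gcongr
  exact hz l i

-- Testing the supremum against the weights `x i` avoids the choice of a near-maximiser.
lemma sum_sq_rademacherSup_sub_flipAt_le (hz : ∀ l k, |g l k| ≤ z) (hW : ∀ l, ∑ k, g l k ^ 2 ≤ W)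
    (ρ : κ → Bool) :
    ∑ i, max (rademacherSup g ρ - rademacherSup g (flipAt ρ i)) 0 ^ 2 ≤ 4 * W := by
  set R := rademacherSup g
  set x : κ → ℝ := fun i => max (R ρ - R (flipAt ρ i)) 0
  have hx (i : κ) : 0 ≤ x i := le_max_right _ _
  have upper : (∑ i, x i) * R ρ ≤ ∑ i, x i * R (flipAt ρ i) + (∑ i, x i ^ 2) / 2 + 2 * W := by
    rw [show R ρ = ⨆ l, ∑ k, sgnB (ρ k) * g l k from rfl,
      Real.mul_iSup_of_nonneg (Finset.sum_nonneg fun i _ => hx i)]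
    refine ciSup_le fun l => ?_
    calc (∑ i, x i) * ∑ k, sgnB (ρ k) * g l k
        ≤ ∑ i, (x i * R (flipAt ρ i) + x i ^ 2 / 2 + 2 * g l i ^ 2) := by
          rw [Finset.sum_mul]
          refine Finset.sum_le_sum fun i _ => (mul_le_mul_of_nonneg_left
            (sum_sgnB_mul_le_rademacherSup_flipAt_add hz ρ i l) (hx i)).trans ?_
          rw [← sq_abs (g l i)]
          linarith [sq_nonneg (x i - 2 * |g l i|)]
      _ ≤ ∑ i, x i * R (flipAt ρ i) + (∑ i, x i ^ 2) / 2 + 2 * W := by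
          rw [Finset.sum_add_distrib, Finset.sum_add_distrib, ← Finset.sum_div, ← Finset.mul_sum]
          gcongr
          exact hW l
  have sq_eq (i : κ) : x i ^ 2 = x i * R ρ - x i * R (flipAt ρ i) := by
    rcases le_total 0 (R ρ - R (flipAt ρ i)) with h | h
    · simp only [x, max_eq_left h]
      ring
    · simp only [x, max_eq_right h]
      ring
  have total : ∑ i, x i ^ 2 = (∑ i, x i) * R ρ - ∑ i, x i * R (flipAt ρ i) := by
    rw [Finset.sum_congr rfl fun i _ => sq_eq i, Finset.sum_sub_distrib, Finset.sum_mul]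
  linarith

theorem hasSubGammaCGF_neg_rademacherSup (hz0 : 0 ≤ z) (hz : ∀ l k, |g l k| ≤ z)
    (hW : ∀ l, ∑ k, g l k ^ 2 ≤ W) :
    HasSubGammaCGF (-rademacherSup g) (2 * W) z (uniformMeasure (κ → Bool)) := by
  have sub_eq (ρ : κ → Bool) (i : κ) : (-rademacherSup g) (flipAt ρ i) - (-rademacherSup g) ρ =
      rademacherSup g ρ - rademacherSup g (flipAt ρ i) := by
    simp only [Pi.neg_apply]
    ring
  refine hasSubGammaCGF_of_sum_sq_flipAt_le hz0 (fun ρ i => ?_) fun ρ => ?_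
  · rw [sub_eq]
    exact rademacherSup_sub_flipAt_le hz ρ i
  · simp only [sub_eq]
    linarith [sum_sq_rademacherSup_sub_flipAt_le hz hW ρ]

end RademacherSup

section MonteCarlo

variable {X ι : Type*} {f : ι → X → ℝ} {n m : ℕ} {S : Fin m → X}

lemma mcera_eq_mul_gup (σ : Fin n → Fin m → Bool) :
    mcera f n m S σ = ((n : ℝ) * m)⁻¹ * gup f S σ := by
  simp only [mcera, gup, ← Real.mul_iSup_of_nonneg (inv_nonneg.2 (Nat.cast_nonneg m)),
    ← Finset.mul_sum, mul_inv, mul_assoc]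

lemma era_eq_mul_integral_gup :
    era f n m S = ((n : ℝ) * m)⁻¹ * ∫ σ, gup f S σ ∂radMeasure n m := by
  simp only [era, mcera_eq_mul_gup, integral_const_mul]

lemma zhat_nonneg : 0 ≤ zhat f S := Real.iSup_nonneg fun _ => abs_nonneg _

lemma abs_le_zhat (hbdd : BddAbove (Set.range fun p : ι × Fin m => |f p.1 (S p.2)|)) (l : ι)
    (k : Fin m) : |f l (S k)| ≤ zhat f S :=
  le_ciSup hbdd (l, k)

lemma sum_sq_le_gWv (hbdd : BddAbove (Set.range fun p : ι × Fin m => |f p.1 (S p.2)|)) (l : ι) :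
    ∑ k, f l (S k) ^ 2 ≤ gWv f S := by
  refine le_ciSup (f := fun l => ∑ k, f l (S k) ^ 2) ⟨∑ _k : Fin m, zhat f S ^ 2, ?_⟩ l
  rintro _ ⟨l', rfl⟩
  exact Finset.sum_le_sum fun k _ => sq_le_sq' (abs_le.1 (abs_le_zhat hbdd l' k)).1
    (abs_le.1 (abs_le_zhat hbdd l' k)).2

lemma gup_eq_zero_of_gWv_eq_zero
    (hbdd : BddAbove (Set.range fun p : ι × Fin m => |f p.1 (S p.2)|)) (hW : gWv f S = 0) :
    gup f S = (0 : (Fin n → Fin m → Bool) → ℝ) := by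
  have f_eq (l : ι) (k : Fin m) : f l (S k) = 0 := by
    have h := sum_sq_le_gWv hbdd l
    rw [hW] at h
    exact pow_eq_zero_iff two_ne_zero |>.1 <| le_antisymm
      ((Finset.single_le_sum (f := fun k => f l (S k) ^ 2) (fun _ _ => sq_nonneg _)
        (Finset.mem_univ k)).trans h) (sq_nonneg _)
  funext σ
  simp only [gup, f_eq, mul_zero, Finset.sum_const_zero, Real.iSup_const_zero, Pi.zero_apply]

lemma gup_nonneg (hbdd : BddAbove (Set.range fun p : ι × Fin m => |f p.1 (S p.2)|))
    (hzero : ∃ l, ∀ k, f l (S k) = 0) (σ : Fin n → Fin m → Bool) : 0 ≤ gup f S σ :=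
  Finset.sum_nonneg fun j _ => rademacherSup_nonneg (abs_le_zhat hbdd) hzero (σ j)

lemma era_nonneg (hbdd : BddAbove (Set.range fun p : ι × Fin m => |f p.1 (S p.2)|))
    (hzero : ∃ l, ∀ k, f l (S k) = 0) : 0 ≤ era f n m S := by
  rw [era_eq_mul_integral_gup]
  exact mul_nonneg (by positivity) (integral_nonneg (gup_nonneg hbdd hzero))

instance : IsProbabilityMeasure (radMeasure n m) :=
  inferInstanceAs (IsProbabilityMeasure (PMF.toMeasure _))

theorem hasSubGammaCGF_neg_gup [Nonempty ι]
    (hbdd : BddAbove (Set.range fun p : ι × Fin m => |f p.1 (S p.2)|)) :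
    HasSubGammaCGF (-gup f S) (n * (2 * gWv f S)) (zhat f S) (radMeasure n m) := by
  have h := (hasSubGammaCGF_neg_rademacherSup zhat_nonneg (abs_le_zhat hbdd)
    (sum_sq_le_gWv hbdd)).sum_eval (measurable_of_finite _) Integrable.of_finite (Fin n)
  rw [← uniformMeasure_pi, Fintype.card_fin] at h
  simp only [Pi.neg_apply, Finset.sum_neg_distrib] at h
  exact h

theorem one_sub_exp_neg_le_measureReal_integral_gup_le
    (hbdd : BddAbove (Set.range fun p : ι × Fin m => |f p.1 (S p.2)|))
    (hzero : ∃ l, ∀ k, f l (S k) = 0) (hn : 0 < n) {L : ℝ} (hL : 0 ≤ L) :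
    1 - Real.exp (-L) ≤ (radMeasure n m).real {σ | (radMeasure n m)[gup f S] ≤ gup f S σ +
      √(2 * (n * (2 * gWv f S) + zhat f S * (radMeasure n m)[gup f S]) * L)} := by
  have : Nonempty ι := hzero.nonempty
  have hW : 0 ≤ gWv f S := Real.iSup_nonneg fun _ => Finset.sum_nonneg fun _ _ => sq_nonneg _
  rcases hW.eq_or_lt with hW | hW
  · simp [gup_eq_zero_of_gWv_eq_zero hbdd hW.symm, (Real.exp_pos _).le]
  · exact (hasSubGammaCGF_neg_gup hbdd).one_sub_exp_neg_le_measureReal_integral_le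
      (by positivity) zhat_nonneg (gup_nonneg hbdd hzero) hL

theorem one_sub_exp_neg_le_measureReal_era_le
    (hbdd : BddAbove (Set.range fun p : ι × Fin m => |f p.1 (S p.2)|))
    (hzero : ∃ l, ∀ k, f l (S k) = 0) (hn : 0 < n) (hm : 0 < m) {L : ℝ} (hL : 0 ≤ L) :
    1 - Real.exp (-L) ≤ (radMeasure n m).real {σ | era f n m S ≤ mcera f n m S σ +
      √(2 * (2 * sigma2hat f S + zhat f S * era f n m S) * L / (n * m))} := by
  have hnm : (0 : ℝ) < n * m := by positivity
  refine (one_sub_exp_neg_le_measureReal_integral_gup_le hbdd hzero hn hL).trans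
    (measureReal_mono fun σ hσ => ?_)
  rw [Set.mem_ofPred_eq] at hσ ⊢
  rw [mcera_eq_mul_gup, era_eq_mul_integral_gup]
  refine (mul_le_mul_of_nonneg_left hσ (inv_nonneg.2 hnm.le)).trans_eq ?_
  rw [mul_add, ← Real.sqrt_sq (inv_nonneg.2 hnm.le), ← Real.sqrt_mul (sq_nonneg _),
    Real.sqrt_sq (inv_nonneg.2 hnm.le), sigma2hat, ← gWv]
  congr 2
  field_simp

end MonteCarlo

lemma le_add_add_sqrt_of_le_add_sqrt {a b x y : ℝ} (ha : 0 ≤ a) (h : x ≤ y + √(2 * a * x + b)) :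
    x ≤ y + a + √(a ^ 2 + 2 * a * y + b) := by
  rcases le_or_gt x (y + a) with hx | hx
  · exact hx.trans (le_add_of_nonneg_right (Real.sqrt_nonneg _))
  · have hsq := (Real.le_sqrt' (by linarith)).1 (sub_le_iff_le_add'.2 h)
    refine sub_le_iff_le_add'.1 ((Real.le_sqrt' (sub_pos.2 hx)).2 ?_)
    linarith

theorem stmt_8_general {X ι : Type*} (f : ι → X → ℝ) (n m : ℕ) (hn : 0 < n) (hm : 0 < m)
    (S : Fin m → X) (hbdd : BddAbove (Set.range fun p : ι × Fin m => |f p.1 (S p.2)|))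
    (hzero : ∃ l₀ : ι, ∀ k : Fin m, f l₀ (S k) = 0) (δ : ℝ) (hδ : δ ∈ Set.Ioo (0 : ℝ) 1) :
    1 - δ ≤ (radMeasure n m
        {σ : Fin n → Fin m → Bool | era f n m S ≤ mcera f n m S σ +
          2 * zhat f S * Real.log (1 / δ) / ((n : ℝ) * (m : ℝ)) +
          Real.sqrt ((2 * zhat f S * Real.log (1 / δ) / ((n : ℝ) * (m : ℝ))) ^ 2 +
            4 * (zhat f S * mcera f n m S σ + sigma2hat f S) * Real.log (1 / δ) /
              ((n : ℝ) * (m : ℝ)))}).toReal := by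
  set L := Real.log (1 / δ) with hL
  have hL0 : 0 ≤ L := Real.log_nonneg (one_le_one_div hδ.1 hδ.2.le)
  have exp_neg_L : Real.exp (-L) = δ := by
    rw [hL, one_div, Real.log_inv, neg_neg, Real.exp_log hδ.1]
  have hz : 0 ≤ zhat f S := zhat_nonneg
  have hera : 0 ≤ era f n m S := era_nonneg hbdd hzero
  have hprob := one_sub_exp_neg_le_measureReal_era_le hbdd hzero hn hm hL0
  rw [exp_neg_L] at hprob
  refine hprob.trans (measureReal_mono fun σ hσ => ?_)
  rw [Set.mem_ofPred_eq] at hσ ⊢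
  have weakened : era f n m S ≤ mcera f n m S σ + √(2 * (2 * zhat f S * L / (n * m)) *
      era f n m S + 4 * sigma2hat f S * L / (n * m)) := by
    refine hσ.trans (add_le_add_right (Real.sqrt_le_sqrt ?_) _)
    have surplus : 0 ≤ 2 * zhat f S * era f n m S * L / (n * m) := by positivity
    linear_combination surplus
  refine (le_add_add_sqrt_of_le_add_sqrt (by positivity) weakened).trans_eq ?_
  congr 2
  ring

theorem stmt_8 {X : Type*} [MeasurableSpace X] {ι : Type*} [Countable ι]
    (f : ι → X → ℝ) (a b : ℝ) (ha : a ≤ 0) (hb : 0 < b)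
    (hmeas : ∀ l : ι, Measurable (f l))
    (hrange : ∀ (l : ι) (x : X), f l x ∈ Set.Icc a b)
    (hzero : ∃ l₀ : ι, ∀ x : X, f l₀ x = 0)
    (n m : ℕ) (hn : 0 < n) (hm : 0 < m) (S : Fin m → X)
    (δ : ℝ) (hδ : δ ∈ Set.Ioo (0 : ℝ) 1) :
    1 - δ ≤ (radMeasure n m
        {σ : Fin n → Fin m → Bool | era f n m S ≤ mcera f n m S σ +
          2 * zhat f S * Real.log (1 / δ) / ((n : ℝ) * (m : ℝ)) +
          Real.sqrt ((2 * zhat f S * Real.log (1 / δ) / ((n : ℝ) * (m : ℝ))) ^ 2 +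
            4 * (zhat f S * mcera f n m S σ + sigma2hat f S) * Real.log (1 / δ) /
              ((n : ℝ) * (m : ℝ)))}).toReal :=
  stmt_8_general f n m hn hm S
    ⟨max |a| |b|, Set.forall_mem_range.2 fun _ => abs_le_max_abs_abs (hrange _ _).1 (hrange _ _).2⟩
    (hzero.imp fun _ h k => h (S k)) δ hδ
end
end

section
/- Let S = (s_1,…,s_m) be m i.i.d. samples from μ, let σ ∈ {−1,1}^{1×m} be a vector of m independent uniform Rademacher variables independent of S, and let δ ∈ (0,1). With probability at least 1 − δ (jointly over S and σ), R(F,m) ≤ R̂¹_m(F,S,σ) + sqrt( 2 ( 2 z R(F,m) + σ²_F ) ln(1/δ) / m ) + z ln(1/δ)/(8 m). -/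
/-!
Absorb the signs into the class: the pairs `(s_i, σ_i)` are i.i.d., and each `(x, σ) ↦ σ f(x)` is
symmetric. After scaling to `|φ_l| ≤ 1`, the claim becomes a lower-tail bound for
`Z = sup_l Σ_k φ_l(ω_k)`, proved by the entropy method. Write `Z_i` for the supremum of the sums
without the `i`-th term, `E` for the mean of `Z`, `s` for the largest second moment of the `φ_l`,
`v = 2 E + m s`, and `Λ(t) = log E[e^{-tZ}]`.

Tensorization with `e^{-t Z_i}` as the comparison function in the `i`-th coordinate bounds the
entropy of `e^{-tZ}` by terms in the increments `Z - Z_i`. These satisfy `Z - Z_i ≤ 1` and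
`Σ_i (Z - Z_i) ≤ Z`, and each dominates, up to `ε`, the symmetric variable `φ_l(ω_i)` in which `l`
is a near-maximizer of `Z_i`. As `y ↦ (1 - t + t y) e^{-t y}` increases up to `y = 1`, its mean at
`Z - Z_i` over the `i`-th coordinate is at least `1 - t - b` with `b = s (t² / 2 + 5 t³ / 8)`, for
`t ≤ 1/2`. Summing over `i` yields `t Λ' - (1 - t - b) Λ ≤ m b`, of which
`E (t² - t) + m s (t² / 2 + t³ / 16)` is a supersolution; hence
`Λ(t) ≤ -t E + v t² / 2 + v t³ / 16`.

The Chernoff bound at `t = √(2 x / v)` gives `P(Z < E - √(2 v x) - x / 8) ≤ e^{-x}` whenever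
this `t` is less than `1/2`; otherwise the threshold is not positive while `Z ≥ 0`.
-/

open MeasureTheory

noncomputable section

open Real ProbabilityTheory Set

lemma integrable_comp_of_mem_isCompact {Ω E : Type*} [MeasurableSpace Ω] {P : Measure Ω}
    [IsFiniteMeasure P] [TopologicalSpace E] [MeasurableSpace E] [OpensMeasurableSpace E]
    {g : E → ℝ} (hg : Continuous g) {U : Ω → E} (hU : Measurable U) {s : Set E}
    (hs : IsCompact s) (hUs : ∀ ω, U ω ∈ s) : Integrable (fun ω => g (U ω)) P := by
  obtain ⟨C, hC⟩ := hs.exists_bound_of_continuousOn hg.continuousOn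
  exact .of_bound (hg.measurable.comp hU).aestronglyMeasurable C
    (ae_of_all _ fun ω => hC _ (hUs ω))

lemma measurePreserving_finCons {n : ℕ} {Ω : Fin (n + 1) → Type*} [∀ i, MeasurableSpace (Ω i)]
    (ν : ∀ i, Measure (Ω i)) [∀ i, SigmaFinite (ν i)] :
    MeasurePreserving (fun p : Ω 0 × (∀ i : Fin n, Ω i.succ) => (Fin.cons p.1 p.2 : ∀ i, Ω i))
      ((ν 0).prod (Measure.pi fun i => ν i.succ)) (Measure.pi ν) := by
  convert! (measurePreserving_piFinSuccAbove ν 0).symm using 1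
  ext p : 1
  exact (Fin.insertNth_zero p.1 p.2).symm

lemma measurePreserving_update {κ : Type*} [Fintype κ] [DecidableEq κ] {Ω : κ → Type*}
    [∀ i, MeasurableSpace (Ω i)] (ν : ∀ i, Measure (Ω i)) [∀ i, IsProbabilityMeasure (ν i)]
    (i : κ) :
    MeasurePreserving (fun p : (∀ j, Ω j) × Ω i => Function.update p.1 i p.2)
      ((Measure.pi ν).prod (ν i)) (Measure.pi ν) := by
  refine ⟨measurable_update', (Measure.pi_eq fun s hs => ?_).symm⟩
  have hpre : (fun p : (∀ j, Ω j) × Ω i => Function.update p.1 i p.2) ⁻¹' univ.pi s =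
      univ.pi (Function.update s i univ) ×ˢ s i := by
    ext ⟨ω, x⟩
    simp only [mem_preimage, mem_univ_pi, mem_prod]
    rw [Function.forall_update_iff ω fun j y => y ∈ s j,
      Function.forall_update_iff s fun j t => ω j ∈ t]
    simp [and_comm]
  rw [Measure.map_apply measurable_update' (.univ_pi hs), hpre, Measure.prod_prod,
    Measure.pi_pi, ← Finset.mul_prod_erase _ _ (Finset.mem_univ i),
    ← Finset.mul_prod_erase _ (fun j => ν j (s j)) (Finset.mem_univ i), Function.update_self,
    measure_univ, one_mul, mul_comm]
  congr 1
  exact Finset.prod_congr rfl fun j hj => by rw [Function.update_of_ne (Finset.ne_of_mem_erase hj)]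

/-- The entropy `E[u log u] - E[u] log E[u]` of the random variable `u = e^G`. -/
def expEntropy {Ω : Type*} [MeasurableSpace Ω] (P : Measure Ω) (G : Ω → ℝ) : ℝ :=
  ∫ ω, exp (G ω) * G ω ∂P - (∫ ω, exp (G ω) ∂P) * log (∫ ω, exp (G ω) ∂P)

/-- The Bregman divergence `u log (u / h) - u + h` of `u log u` between `u = e^G` and `h = e^H`. -/
def expBregman (G H : ℝ) : ℝ := exp G * (G - H) - exp G + exp H

lemma continuous_expBregman : Continuous fun p : ℝ × ℝ => expBregman p.1 p.2 := by
  unfold expBregman; fun_prop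

lemma exp_mul_add_le_expBregman (G H T : ℝ) :
    exp G * T + exp H * (1 - exp T) ≤ expBregman G H := by
  have hexp : exp G * exp (T - (G - H)) = exp H * exp T := by
    rw [← exp_add, ← exp_add]; ring_nf
  have htangent := mul_le_mul_of_nonneg_left (add_one_le_exp (T - (G - H))) (exp_pos G).le
  unfold expBregman
  linarith

lemma expEntropy_eq_integral {Ω : Type*} [MeasurableSpace Ω] {P : Measure Ω} {G : Ω → ℝ}
    (hexp : Integrable (fun ω => exp (G ω)) P) (hmul : Integrable (fun ω => exp (G ω) * G ω) P) :
    expEntropy P G = ∫ ω, exp (G ω) * (G ω - log (∫ ω, exp (G ω) ∂P)) ∂P := by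
  simp only [mul_sub]
  rw [integral_sub hmul (hexp.mul_const _), integral_mul_const, expEntropy]

lemma integral_exp_sub_log_integral_exp {Ω : Type*} [MeasurableSpace Ω] {P : Measure Ω} [NeZero P]
    {G : Ω → ℝ} (hexp : Integrable (fun ω => exp (G ω)) P) :
    ∫ ω, exp (G ω - log (∫ ω, exp (G ω) ∂P)) ∂P = 1 := by
  simp only [exp_sub, exp_log (integral_exp_pos hexp)]
  rw [integral_div, div_self (integral_exp_pos hexp).ne']

lemma expEntropy_map {α β : Type*} [MeasurableSpace α] [MeasurableSpace β] {P : Measure α}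
    {U : α → β} {G : β → ℝ} (hU : Measurable U) (hG : Measurable G) :
    expEntropy (P.map U) G = expEntropy P (G ∘ U) := by
  unfold expEntropy
  rw [integral_map hU.aemeasurable (by fun_prop), integral_map hU.aemeasurable (by fun_prop)]
  rfl

section Tensorization

variable {α β : Type*} [MeasurableSpace α] [MeasurableSpace β] {ν : Measure α} {P : Measure β}
  [IsProbabilityMeasure ν] [IsProbabilityMeasure P] {K : ℝ}

lemma log_integral_exp_mem_Icc {G : β → ℝ} (hG : Measurable G) (hGK : ∀ y, G y ∈ Icc (-K) K) :
    log (∫ y, exp (G y) ∂P) ∈ Icc (-K) K := by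
  have h_int : Integrable (fun y => exp (G y)) P :=
    integrable_comp_of_mem_isCompact continuous_exp hG isCompact_Icc hGK
  have hlower : exp (-K) ≤ ∫ y, exp (G y) ∂P := by
    simpa using integral_mono (integrable_const (μ := P) (exp (-K))) h_int
      fun y => exp_le_exp.2 (hGK y).1
  have hupper : ∫ y, exp (G y) ∂P ≤ exp K := by
    simpa using integral_mono h_int (integrable_const (μ := P) (exp K))
      fun y => exp_le_exp.2 (hGK y).2
  have hpos := (exp_pos _).trans_le hlower
  exact ⟨(le_log_iff_exp_le hpos).2 hlower, (log_le_iff_le_exp hpos).2 hupper⟩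

lemma measurable_log_integral_exp {G : α × β → ℝ} (hG : Measurable G) :
    Measurable fun x => log (∫ y, exp (G (x, y)) ∂P) :=
  measurable_log.comp hG.exp.stronglyMeasurable.integral_prod_right'.measurable

lemma exp_log_integral_exp_prodMk {G : α × β → ℝ} (hG : Measurable G)
    (hGK : ∀ p, G p ∈ Icc (-K) K) (x : α) :
    exp (log (∫ y, exp (G (x, y)) ∂P)) = ∫ y, exp (G (x, y)) ∂P :=
  exp_log <| integral_exp_pos <| integrable_comp_of_mem_isCompact continuous_exp
    (hG.comp measurable_prodMk_left) isCompact_Icc fun y => hGK (x, y)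

lemma integrable_integral_exp_mul_log {G : α × β → ℝ} (hG : Measurable G)
    (hGK : ∀ p, G p ∈ Icc (-K) K) :
    Integrable (fun x => (∫ y, exp (G (x, y)) ∂P) * log (∫ y, exp (G (x, y)) ∂P)) ν := by
  simpa only [Pi.mul_apply, id, exp_log_integral_exp_prodMk hG hGK] using
    integrable_comp_of_mem_isCompact (P := ν) (continuous_exp.mul continuous_id)
      (measurable_log_integral_exp (P := P) hG) isCompact_Icc fun x =>
      log_integral_exp_mem_Icc (hG.comp measurable_prodMk_left) fun y => hGK (x, y)

lemma integrable_exp_mul_self {G : β → ℝ} (hG : Measurable G) (hGK : ∀ y, G y ∈ Icc (-K) K) :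
    Integrable (fun y => exp (G y) * G y) P :=
  integrable_comp_of_mem_isCompact (continuous_exp.mul continuous_id) hG isCompact_Icc hGK

lemma integrable_expEntropy_prodMk {G : α × β → ℝ} (hG : Measurable G)
    (hGK : ∀ p, G p ∈ Icc (-K) K) : Integrable (fun x => expEntropy P fun y => G (x, y)) ν :=
  (integrable_exp_mul_self hG hGK).integral_prod_left.sub (integrable_integral_exp_mul_log hG hGK)

lemma expEntropy_prod {G : α × β → ℝ} (hG : Measurable G) (hGK : ∀ p, G p ∈ Icc (-K) K) :
    expEntropy (ν.prod P) G = ∫ x, expEntropy P (fun y => G (x, y)) ∂ν +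
      expEntropy ν fun x => log (∫ y, exp (G (x, y)) ∂P) := by
  have hexp : Integrable (fun p => exp (G p)) (ν.prod P) :=
    integrable_comp_of_mem_isCompact continuous_exp hG isCompact_Icc hGK
  have hmul := integrable_exp_mul_self (P := ν.prod P) hG hGK
  simp only [expEntropy, exp_log_integral_exp_prodMk hG hGK]
  rw [integral_sub hmul.integral_prod_left (integrable_integral_exp_mul_log hG hGK),
    integral_prod _ hexp, integral_prod _ hmul]
  ring

lemma expEntropy_log_integral_exp_le {G : α × β → ℝ} {H : β → ℝ} (hG : Measurable G)
    (hH : Measurable H) (hGK : ∀ p, G p ∈ Icc (-K) K) (hHK : ∀ y, H y ∈ Icc (-K) K) :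
    expEntropy ν (fun x => log (∫ y, exp (G (x, y)) ∂P)) ≤
      ∫ p, expBregman (G p) (H p.2) ∂ν.prod P := by
  set L : α → ℝ := fun x => log (∫ y, exp (G (x, y)) ∂P)
  have hLmeas : Measurable L := measurable_log_integral_exp hG
  have hLK (x : α) : L x ∈ Icc (-K) K :=
    log_integral_exp_mem_Icc (hG.comp measurable_prodMk_left) fun y => hGK (x, y)
  have hL (x : α) : exp (L x) = ∫ y, exp (G (x, y)) ∂P := exp_log_integral_exp_prodMk hG hGK x
  set T : α → ℝ := fun x => L x - log (∫ x, exp (L x) ∂ν)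
  have h_int {g : ℝ × ℝ × ℝ → ℝ} (hg : Continuous g) :
      Integrable (fun p : α × β => g (G p, L p.1, H p.2)) (ν.prod P) :=
    integrable_comp_of_mem_isCompact hg (by fun_prop)
      (isCompact_Icc.prod (isCompact_Icc.prod isCompact_Icc)) fun p => ⟨hGK p, hLK p.1, hHK p.2⟩
  have hexpL : Integrable (fun x => exp (L x)) ν :=
    integrable_comp_of_mem_isCompact continuous_exp hLmeas isCompact_Icc hLK
  have hleft : Integrable (fun p => exp (G p) * T p.1) (ν.prod P) :=
    h_int (g := fun q => exp q.1 * (q.2.1 - _)) (by fun_prop)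
  have hright : Integrable (fun p => exp (H p.2) * (1 - exp (T p.1))) (ν.prod P) :=
    h_int (g := fun q => exp q.2.2 * (1 - exp (q.2.1 - _))) (by fun_prop)
  have hentropy : ∫ p, exp (G p) * T p.1 ∂ν.prod P = expEntropy ν L := by
    rw [integral_prod _ hleft, expEntropy_eq_integral hexpL (integrable_exp_mul_self hLmeas hLK)]
    simp only [integral_mul_const, hL, T]
  have hcancel : ∫ p, exp (H p.2) * (1 - exp (T p.1)) ∂ν.prod P = 0 := by
    simp_rw [mul_comm (exp (H _))]
    rw [integral_prod_mul (fun x => 1 - exp (T x)) (fun y => exp (H y)),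
      integral_sub (integrable_const _), integral_exp_sub_log_integral_exp hexpL]
    · simp
    · exact integrable_comp_of_mem_isCompact (continuous_exp.comp (continuous_sub_right _)) hLmeas
        isCompact_Icc hLK
  calc expEntropy ν L = ∫ p, (exp (G p) * T p.1 + exp (H p.2) * (1 - exp (T p.1))) ∂ν.prod P := by
        rw [integral_add hleft hright, hentropy, hcancel, add_zero]
    _ ≤ ∫ p, expBregman (G p) (H p.2) ∂ν.prod P :=
        integral_mono (hleft.add hright) (h_int (g := fun q => expBregman q.1 q.2.2)
          (continuous_expBregman.comp (continuous_fst.prodMk continuous_snd.snd)))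
          fun p => exp_mul_add_le_expBregman _ _ _

lemma expEntropy_prod_le {G : α × β → ℝ} {H : β → ℝ} (hG : Measurable G) (hH : Measurable H)
    (hGK : ∀ p, G p ∈ Icc (-K) K) (hHK : ∀ y, H y ∈ Icc (-K) K) :
    expEntropy (ν.prod P) G ≤ ∫ x, expEntropy P (fun y => G (x, y)) ∂ν +
      ∫ p, expBregman (G p) (H p.2) ∂ν.prod P := by
  rw [expEntropy_prod hG hGK]
  gcongr
  exact expEntropy_log_integral_exp_le hG hH hGK hHK

end Tensorization

lemma expEntropy_pi_succ_le {K : ℝ} {n : ℕ} {Ω : Fin (n + 1) → Type*}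
    [∀ i, MeasurableSpace (Ω i)] (ν : ∀ i, Measure (Ω i)) [∀ i, IsProbabilityMeasure (ν i)]
    {G H : (∀ i, Ω i) → ℝ} (hG : Measurable G) (hH : Measurable H) (hGK : ∀ ω, G ω ∈ Icc (-K) K)
    (hHK : ∀ ω, H ω ∈ Icc (-K) K) (hupdate : ∀ ω x, H (Function.update ω 0 x) = H ω) :
    expEntropy (Measure.pi ν) G ≤
      ∫ x, expEntropy (Measure.pi fun i : Fin n => ν i.succ) (fun y => G (Fin.cons x y)) ∂ν 0 +
        ∫ ω, expBregman (G ω) (H ω) ∂Measure.pi ν := by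
  let cons : Ω 0 × (∀ i : Fin n, Ω i.succ) → ∀ i, Ω i := fun p => Fin.cons p.1 p.2
  have hcons : MeasurePreserving cons ((ν 0).prod (Measure.pi fun i => ν i.succ)) (Measure.pi ν) :=
    measurePreserving_finCons ν
  obtain ⟨x₀⟩ : Nonempty (Ω 0) := (ν 0).nonempty_of_neZero
  have hH₀ (p) : H (cons p) = H (cons (x₀, p.2)) := by
    rw [← hupdate (cons p) x₀, Fin.update_cons_zero]
  have htransport : ∫ ω, expBregman (G ω) (H ω) ∂Measure.pi ν =
      ∫ p, expBregman (G (cons p)) (H (cons p)) ∂(ν 0).prod (Measure.pi fun i => ν i.succ) :=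
    (hcons.hasLaw.integral_comp
      (continuous_expBregman.measurable.comp (hG.prodMk hH)).aestronglyMeasurable).symm
  rw [htransport, ← hcons.map_eq, expEntropy_map hcons.measurable hG]
  simp_rw [hH₀]
  exact expEntropy_prod_le (H := fun y => H (cons (x₀, y))) (hG.comp hcons.measurable)
    (hH.comp (hcons.measurable.comp measurable_prodMk_left)) (fun p => hGK _) fun y => hHK _

theorem expEntropy_pi_le_sum {K : ℝ} {n : ℕ} {Ω : Fin n → Type*} [∀ i, MeasurableSpace (Ω i)]
    (ν : ∀ i, Measure (Ω i)) [∀ i, IsProbabilityMeasure (ν i)] {G : (∀ i, Ω i) → ℝ}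
    {H : Fin n → (∀ i, Ω i) → ℝ} (hG : Measurable G) (hH : ∀ i, Measurable (H i))
    (hGK : ∀ ω, G ω ∈ Icc (-K) K) (hHK : ∀ i ω, H i ω ∈ Icc (-K) K)
    (hupdate : ∀ i ω x, H i (Function.update ω i x) = H i ω) :
    expEntropy (Measure.pi ν) G ≤ ∑ i, ∫ ω, expBregman (G ω) (H i ω) ∂Measure.pi ν := by
  induction n with
  | zero =>
    have hconst : G = fun _ => G isEmptyElim := funext fun ω => congrArg G (Subsingleton.elim _ _)
    rw [hconst]
    simp [expEntropy]
  | succ n ih =>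
    let P' := Measure.pi fun i : Fin n => ν i.succ
    let cons : Ω 0 × (∀ i : Fin n, Ω i.succ) → ∀ i, Ω i := fun p => Fin.cons p.1 p.2
    have hcons : MeasurePreserving cons ((ν 0).prod P') (Measure.pi ν) :=
      measurePreserving_finCons ν
    have hslice (x : Ω 0) : Measurable fun y => cons (x, y) :=
      hcons.measurable.comp measurable_prodMk_left
    have h_int (i) : Integrable (fun p => expBregman (G (cons p)) (H i (cons p))) ((ν 0).prod P') :=
      integrable_comp_of_mem_isCompact continuous_expBregman
        ((hG.prodMk (hH i)).comp hcons.measurable) (isCompact_Icc.prod isCompact_Icc)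
        fun p => ⟨hGK _, hHK i _⟩
    have htail (x : Ω 0) : expEntropy P' (fun y => G (cons (x, y))) ≤
        ∑ i : Fin n, ∫ y, expBregman (G (cons (x, y))) (H i.succ (cons (x, y))) ∂P' :=
      ih (fun i => ν i.succ) (hG.comp (hslice x)) (fun i => (hH i.succ).comp (hslice x))
        (fun y => hGK _) (fun i y => hHK i.succ _)
        fun i y z => by rw [← hupdate i.succ (cons (x, y)) z]; simp only [cons, Fin.cons_update]
    have hsplit (i : Fin n) : ∫ ω, expBregman (G ω) (H i.succ ω) ∂Measure.pi ν =
        ∫ x, ∫ y, expBregman (G (cons (x, y))) (H i.succ (cons (x, y))) ∂P' ∂ν 0 := by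
      rw [← integral_prod _ (h_int i.succ)]
      exact (hcons.hasLaw.integral_comp
        (continuous_expBregman.measurable.comp (hG.prodMk (hH _))).aestronglyMeasurable).symm
    have htail_integral := integral_mono
      (integrable_expEntropy_prodMk (hG.comp hcons.measurable) fun p => hGK _)
      (integrable_finsetSum _ fun i _ => (h_int (Fin.succ i)).integral_prod_left) htail
    rw [integral_finsetSum _ fun i _ => (h_int (Fin.succ i)).integral_prod_left] at htail_integral
    simp_rw [Fin.sum_univ_succ, hsplit]
    calc expEntropy (Measure.pi ν) G
        ≤ ∫ x, expEntropy P' (fun y => G (cons (x, y))) ∂ν 0 +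
            ∫ ω, expBregman (G ω) (H 0 ω) ∂Measure.pi ν :=
          expEntropy_pi_succ_le ν hG (hH 0) hGK (hHK 0) (hupdate 0)
      _ ≤ _ := (add_le_add_left htail_integral _).trans_eq (add_comm _ _)

lemma one_add_sq_div_two_le_cosh (s : ℝ) : 1 + s ^ 2 / 2 ≤ cosh s := by
  have hcosh := cosh_two_mul (s / 2)
  rw [cosh_sq, mul_div_cancel₀ s two_ne_zero] at hcosh
  have hsinh : (s / 2) ^ 2 ≤ sinh (s / 2) ^ 2 := by
    rw [sq_le_sq, abs_sinh]
    exact self_le_sinh_iff.2 (abs_nonneg _)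
  linarith

lemma mul_sinh_le {s t : ℝ} (hst : |s| ≤ t) (ht : t ≤ 1 / 2) :
    s * sinh s ≤ s ^ 2 * (1 + t / 8) := by
  wlog hs : 0 ≤ s generalizing s
  · simpa using this (s := -s) (by rwa [abs_neg]) (by linarith)
  rw [abs_of_nonneg hs] at hst
  have hexp := exp_bound (x := s) (by rw [abs_of_nonneg hs]; linarith) (n := 3) (by norm_num)
  have hexp_neg := exp_bound (x := -s) (by rw [abs_neg, abs_of_nonneg hs]; linarith) (n := 3)
    (by norm_num)
  norm_num [Finset.sum_range_succ, Nat.factorial, abs_of_nonneg hs] at hexp hexp_neg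
  have hcubic : sinh s ≤ s + 2 / 9 * s ^ 3 := by
    rw [sinh_eq]
    linarith [le_of_abs_le hexp, neg_le_of_abs_le hexp_neg]
  have ht0 := hs.trans hst
  have hs_half := hst.trans ht
  calc s * sinh s ≤ s * (s + 2 / 9 * s ^ 3) := by gcongr
    _ = s ^ 2 * (1 + 2 / 9 * (s * s)) := by ring
    _ ≤ s ^ 2 * (1 + 2 / 9 * (t * (1 / 2))) := by gcongr
    _ ≤ s ^ 2 * (1 + t / 8) := by gcongr; linarith

/-- The weight `(1 - t + t d) e^{-t d}` attached to an increment `d`: with `b` free,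
`(1 - t - b) expBregman (-tZ) (-tY) + e^{-tY} (incrWeight t (Z - Y) - (1 - t - b))` is
`e^{-tZ}` times an affine function of `Z - Y`. -/
def incrWeight (t d : ℝ) : ℝ := (1 - t + t * d) * exp (-(t * d))

lemma continuous_incrWeight (t : ℝ) : Continuous (incrWeight t) := by
  unfold incrWeight; fun_prop

lemma monotoneOn_incrWeight (t : ℝ) : MonotoneOn (incrWeight t) (Iic 1) := by
  have hderiv (d : ℝ) : HasDerivAt (incrWeight t) (t ^ 2 * (1 - d) * exp (-(t * d))) d := by
    have hlin := (hasDerivAt_id d).const_mul t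
    convert! (hlin.const_add (1 - t)).mul hlin.neg.exp using 1
    simp only [id_eq, Pi.neg_apply]
    ring
  refine monotoneOn_of_deriv_nonneg (convex_Iic 1) (continuous_incrWeight t).continuousOn
    (fun d _ => (hderiv d).differentiableAt.differentiableWithinAt) fun d hd => ?_
  rw [interior_Iic] at hd
  rw [(hderiv d).deriv]
  have : 0 ≤ 1 - d := sub_nonneg.2 hd.le
  positivity

lemma incrWeight_add_incrWeight_neg (t d : ℝ) :
    incrWeight t d + incrWeight t (-d) =
      2 * ((1 - t) * cosh (t * d) - t * d * sinh (t * d)) := by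
  unfold incrWeight
  rw [cosh_eq, sinh_eq]
  ring_nf

/-- The coefficient of the variance in the lower bound for the mean weight of a symmetric
increment, where it arises as `t ^ 2 * (1 + t / 8)`, the bound for the `sinh` term,
minus the gain `(1 - t) * t ^ 2 / 2` of the bound for `cosh`. -/
def varianceLoss (t : ℝ) : ℝ := t ^ 2 / 2 + 5 * t ^ 3 / 8

lemma le_incrWeight_add_incrWeight_neg {t d : ℝ} (ht : t ∈ Icc 0 (1 / 2)) (hd : |d| ≤ 1) :
    2 * (1 - t - varianceLoss t * d ^ 2) ≤ incrWeight t d + incrWeight t (-d) := by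
  have htd : |t * d| ≤ t := by
    rw [abs_mul, abs_of_nonneg ht.1]
    exact mul_le_of_le_one_right ht.1 hd
  have hcosh := mul_le_mul_of_nonneg_left (one_add_sq_div_two_le_cosh (t * d))
    (show 0 ≤ 1 - t by linarith [ht.2])
  have hsinh := mul_sinh_le htd ht.2
  rw [incrWeight_add_incrWeight_neg, varianceLoss]
  linarith

lemma le_integral_incrWeight_of_identDistrib_neg {Ω : Type*} [MeasurableSpace Ω] {ν : Measure Ω}
    [IsProbabilityMeasure ν] {Y : Ω → ℝ} {t : ℝ} (ht : t ∈ Icc 0 (1 / 2)) (hY : Measurable Y)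
    (hY1 : ∀ x, |Y x| ≤ 1) (hsymm : IdentDistrib Y (-Y) ν ν) :
    1 - t - varianceLoss t * ∫ x, Y x ^ 2 ∂ν ≤ ∫ x, incrWeight t (Y x) ∂ν := by
  have h_int {g : ℝ → ℝ} (hg : Continuous g) : Integrable (fun x => g (Y x)) ν :=
    integrable_comp_of_mem_isCompact hg hY isCompact_Icc fun x => abs_le.1 (hY1 x)
  have hpos := h_int (continuous_incrWeight t)
  have hneg := h_int ((continuous_incrWeight t).comp continuous_neg)
  have hneg_eq : ∫ x, incrWeight t (-Y x) ∂ν = ∫ x, incrWeight t (Y x) ∂ν :=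
    (hsymm.comp (continuous_incrWeight t).measurable).integral_eq.symm
  have hsq := h_int (g := fun y => varianceLoss t * y ^ 2) (by fun_prop)
  have hmono := integral_mono (((integrable_const (1 - t)).sub hsq).const_mul 2) (hpos.add hneg)
    fun x => le_incrWeight_add_incrWeight_neg ht (hY1 x)
  rw [integral_const_mul, integral_add' hpos hneg] at hmono
  simp only [Pi.sub_apply, Function.comp_apply, hneg_eq] at hmono
  rw [integral_sub (integrable_const _) hsq, integral_const_mul] at hmono
  simp only [integral_const, probReal_univ, smul_eq_mul, one_mul] at hmono
  linarith

lemma le_integral_comp_of_forall_approx {Ω : Type*} [MeasurableSpace Ω] {ν : Measure Ω}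
    [IsProbabilityMeasure ν] {g : ℝ → ℝ} {D : Ω → ℝ} {c A B : ℝ} (hg : Continuous g)
    (hmono : MonotoneOn g (Iic B)) (hD : Measurable D) (hDB : ∀ x, D x ≤ B)
    (happrox : ∀ ε > 0, ∃ u : Ω → ℝ, Measurable u ∧ (∀ x, u x ∈ Icc A B) ∧
      (∀ x, u x - ε ≤ D x) ∧ c ≤ ∫ x, g (u x) ∂ν) :
    c ≤ ∫ x, g (D x) ∂ν := by
  refine le_of_forall_pos_le_add fun η hη => ?_
  obtain ⟨ε₀, hε₀, hclose⟩ := Metric.uniformContinuousOn_iff_le.1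
    (isCompact_Icc.uniformContinuousOn_of_continuous (hg.continuousOn (s := Icc (A - 1) B))) η hη
  set ε := min ε₀ 1
  have hε : 0 < ε := lt_min hε₀ one_pos
  have hε1 : ε ≤ 1 := min_le_right _ _
  obtain ⟨u, hu, huAB, huD, hcu⟩ := happrox ε hε
  have hpoint (x : Ω) : g (u x) ≤ g (D x) + η := by
    obtain ⟨hA, hB⟩ := huAB x
    have hdist : dist (g (u x)) (g (u x - ε)) ≤ η := by
      refine hclose _ ⟨by linarith, hB⟩ _ ⟨by linarith, by linarith⟩ ?_
      rw [dist_self_sub_right, norm_of_nonneg hε.le]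
      exact min_le_left _ _
    have := hmono (mem_Iic.2 (by linarith)) (mem_Iic.2 (hDB x)) (huD x)
    linarith [(abs_le.1 (Real.dist_eq _ _ ▸ hdist)).2]
  have hDint : Integrable (fun x => g (D x)) ν :=
    integrable_comp_of_mem_isCompact hg hD (isCompact_Icc (a := A - 1) (b := B)) fun x =>
      ⟨by linarith [huD x, (huAB x).1], hDB x⟩
  calc c ≤ ∫ x, g (u x) ∂ν := hcu
    _ ≤ ∫ x, (g (D x) + η) ∂ν := integral_mono
        (integrable_comp_of_mem_isCompact hg hu isCompact_Icc huAB)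
        (hDint.add (integrable_const η)) hpoint
    _ = ∫ x, g (D x) ∂ν + η := by simp [integral_add hDint (integrable_const η)]

lemma mul_expBregman_add_exp_mul_incrWeight (t b z y : ℝ) :
    (1 - t - b) * expBregman (-(t * z)) (-(t * y)) +
        exp (-(t * y)) * (incrWeight t (z - y) - (1 - t - b)) =
      (b + t * (t + b) * (z - y)) * exp (-(t * z)) := by
  have hexp : exp (-(t * z)) = exp (-(t * y)) * exp (-(t * (z - y))) := by
    rw [← exp_add]; ring_nf
  rw [expBregman, incrWeight, hexp]
  ring

section SelfBounding

variable {κ : Type*} [Fintype κ] [DecidableEq κ] {Ω : κ → Type*} [∀ i, MeasurableSpace (Ω i)]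
  {ν : ∀ i, Measure (Ω i)} [∀ i, IsProbabilityMeasure (ν i)]

lemma integral_nonneg_of_forall_update {i : κ} {g : (∀ j, Ω j) → ℝ}
    (hg : Integrable g (Measure.pi ν)) (hupdate : ∀ ω, 0 ≤ ∫ x, g (Function.update ω i x) ∂ν i) :
    0 ≤ ∫ ω, g ω ∂Measure.pi ν := by
  have hresample := measurePreserving_update ν i
  rw [← hresample.hasLaw.integral_comp hg.aestronglyMeasurable,
    integral_prod _ (hresample.integrable_comp_of_integrable hg)]
  exact integral_nonneg hupdate

lemma mul_integral_expBregman_le {Z Y : (∀ j, Ω j) → ℝ} {K t b : ℝ} (i : κ) (hZ : Measurable Z)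
    (hY : Measurable Y) (hZK : ∀ ω, Z ω ∈ Icc (-K) K) (hYK : ∀ ω, Y ω ∈ Icc (-K) K)
    (hupdate : ∀ ω x, Y (Function.update ω i x) = Y ω)
    (hweight : ∀ ω, 1 - t - b ≤ ∫ x, incrWeight t (Z (Function.update ω i x) - Y ω) ∂ν i) :
    (1 - t - b) * ∫ ω, expBregman (-(t * Z ω)) (-(t * Y ω)) ∂Measure.pi ν ≤
      ∫ ω, (b + t * (t + b) * (Z ω - Y ω)) * exp (-(t * Z ω)) ∂Measure.pi ν := by
  have h_int {g : ℝ × ℝ → ℝ} (hg : Continuous g) :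
      Integrable (fun ω => g (Z ω, Y ω)) (Measure.pi ν) :=
    integrable_comp_of_mem_isCompact hg (hZ.prodMk hY) (isCompact_Icc.prod isCompact_Icc)
      fun ω => ⟨hZK ω, hYK ω⟩
  have hbregman : Integrable (fun ω => expBregman (-(t * Z ω)) (-(t * Y ω))) (Measure.pi ν) :=
    h_int (g := fun q => expBregman (-(t * q.1)) (-(t * q.2)))
      (by unfold expBregman; fun_prop)
  have hincr : Integrable (fun ω => exp (-(t * Y ω)) * (incrWeight t (Z ω - Y ω) - (1 - t - b)))
      (Measure.pi ν) :=
    h_int (g := fun q => exp (-(t * q.2)) * (incrWeight t (q.1 - q.2) - (1 - t - b)))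
      (by unfold incrWeight; fun_prop)
  have hnonneg := integral_nonneg_of_forall_update (i := i) hincr fun ω => by
    have hZx : Integrable (fun x => incrWeight t (Z (Function.update ω i x) - Y ω)) (ν i) :=
      integrable_comp_of_mem_isCompact (g := fun r => incrWeight t (r - Y ω))
        ((continuous_incrWeight t).comp (continuous_sub_right _))
        (hZ.comp (measurable_update ω)) isCompact_Icc fun x => hZK _
    simp only [hupdate]
    rw [integral_const_mul, integral_sub hZx (integrable_const _)]
    refine mul_nonneg (exp_pos _).le (sub_nonneg.2 ?_)
    simpa using hweight ω
  simp_rw [← mul_expBregman_add_exp_mul_incrWeight]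
  rw [integral_add (hbregman.const_mul _) hincr, integral_const_mul]
  linarith

end SelfBounding

section CumulantGeneratingFunction

variable {Ω : Type*} [MeasurableSpace Ω] {P : Measure Ω} {X : Ω → ℝ}

lemma mem_interior_integrableExpSet_of_mem_Icc [IsFiniteMeasure P] {l u : ℝ} (hX : Measurable X)
    (hXlu : ∀ ω, X ω ∈ Icc l u) (t : ℝ) : t ∈ interior (integrableExpSet X P) := by
  have huniv : integrableExpSet X P = univ := eq_univ_of_forall fun _ =>
    integrable_exp_mul_of_mem_Icc hX.aemeasurable (ae_of_all _ hXlu)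
  simp [huniv]

lemma integral_affine_mul_exp [NeZero P] {t : ℝ} (ht : t ∈ interior (integrableExpSet X P))
    (α β : ℝ) :
    ∫ ω, (α + β * X ω) * exp (t * X ω) ∂P = mgf X P t * (α + β * deriv (cgf X P) t) := by
  have hexp : Integrable (fun ω => exp (t * X ω)) P :=
    interior_subset (s := integrableExpSet X P) ht
  have hmul : Integrable (fun ω => X ω * exp (t * X ω)) P := by
    simpa using integrable_pow_mul_exp_of_mem_interior_integrableExpSet ht 1
  simp only [add_mul, mul_assoc]
  rw [integral_add (hexp.const_mul α) (hmul.const_mul β), integral_const_mul, integral_const_mul,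
    deriv_cgf ht, mul_add, mul_left_comm _ β,
    mul_div_cancel₀ _ (mgf_pos' (NeZero.ne P) hexp).ne', mgf]
  ring

lemma expEntropy_const_mul [NeZero P] {t : ℝ} (ht : t ∈ interior (integrableExpSet X P)) :
    expEntropy P (fun ω => t * X ω) = mgf X P t * (t * deriv (cgf X P) t - cgf X P t) := by
  have haffine := integral_affine_mul_exp ht 0 t
  simp only [zero_add, mul_comm _ (exp _)] at haffine
  rw [expEntropy, haffine, mul_sub]
  rfl

end CumulantGeneratingFunction

section DifferentialInequality

variable {n : ℕ} {Ω : Fin n → Type*} [∀ i, MeasurableSpace (Ω i)] {ν : ∀ i, Measure (Ω i)}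
  [∀ i, IsProbabilityMeasure (ν i)] {Z : (∀ i, Ω i) → ℝ} {Y : Fin n → (∀ i, Ω i) → ℝ} {K t b : ℝ}

theorem mul_expEntropy_neg_mul_le (ht : 0 ≤ t) (hb : 0 ≤ b) (htb : t + b ≤ 1) (hZ : Measurable Z)
    (hY : ∀ i, Measurable (Y i)) (hZK : ∀ ω, Z ω ∈ Icc (-K) K) (hYK : ∀ i ω, Y i ω ∈ Icc (-K) K)
    (hupdate : ∀ i ω x, Y i (Function.update ω i x) = Y i ω)
    (hself : ∀ ω, ∑ i, (Z ω - Y i ω) ≤ Z ω)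
    (hweight : ∀ i ω, 1 - t - b ≤ ∫ x, incrWeight t (Z (Function.update ω i x) - Y i ω) ∂ν i) :
    (1 - t - b) * expEntropy (Measure.pi ν) (fun ω => -(t * Z ω)) ≤
      ∫ ω, (n * b + t * (t + b) * Z ω) * exp (-(t * Z ω)) ∂Measure.pi ν := by
  have hscale {r : ℝ} (hr : r ∈ Icc (-K) K) : -(t * r) ∈ Icc (-(t * K)) (t * K) := by
    have := mul_le_mul_of_nonneg_left hr.1 ht
    have := mul_le_mul_of_nonneg_left hr.2 ht
    constructor <;> linarith
  have hc : 0 ≤ 1 - t - b := by linarith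
  have h_int (i) : Integrable (fun ω => (b + t * (t + b) * (Z ω - Y i ω)) * exp (-(t * Z ω)))
      (Measure.pi ν) :=
    integrable_comp_of_mem_isCompact
      (g := fun q : ℝ × ℝ => (b + t * (t + b) * (q.1 - q.2)) * exp (-(t * q.1))) (by fun_prop)
      (hZ.prodMk (hY i)) (isCompact_Icc.prod isCompact_Icc) fun ω => ⟨hZK ω, hYK i ω⟩
  calc (1 - t - b) * expEntropy (Measure.pi ν) (fun ω => -(t * Z ω))
      ≤ (1 - t - b) * ∑ i, ∫ ω, expBregman (-(t * Z ω)) (-(t * Y i ω)) ∂Measure.pi ν := by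
        gcongr
        exact expEntropy_pi_le_sum ν (H := fun i ω => -(t * Y i ω)) (by fun_prop) (by fun_prop)
          (fun ω => hscale (hZK ω)) (fun i ω => hscale (hYK i ω))
          fun i ω x => by rw [hupdate]
    _ ≤ ∑ i, ∫ ω, (b + t * (t + b) * (Z ω - Y i ω)) * exp (-(t * Z ω)) ∂Measure.pi ν := by
        rw [Finset.mul_sum]
        exact Finset.sum_le_sum fun i _ =>
          mul_integral_expBregman_le i hZ (hY i) hZK (hYK i) (hupdate i) (hweight i)
    _ = ∫ ω, ∑ i, (b + t * (t + b) * (Z ω - Y i ω)) * exp (-(t * Z ω)) ∂Measure.pi ν :=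
        (integral_finsetSum _ fun i _ => h_int i).symm
    _ ≤ ∫ ω, (n * b + t * (t + b) * Z ω) * exp (-(t * Z ω)) ∂Measure.pi ν := by
        refine integral_mono (integrable_finsetSum _ fun i _ => h_int i) ?_ fun ω => ?_
        · exact integrable_comp_of_mem_isCompact
            (g := fun r => (n * b + t * (t + b) * r) * exp (-(t * r))) (by fun_prop) hZ
            isCompact_Icc hZK
        · simp only [← Finset.sum_mul, Finset.sum_add_distrib, ← Finset.mul_sum, Finset.sum_const,
            Finset.card_univ, Fintype.card_fin, nsmul_eq_mul]
          gcongr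
          exact hself ω

lemma mul_deriv_cgf_neg_sub_le (ht : 0 ≤ t) (hb : 0 ≤ b) (htb : t + b ≤ 1) (hZ : Measurable Z)
    (hY : ∀ i, Measurable (Y i)) (hZK : ∀ ω, Z ω ∈ Icc (-K) K) (hYK : ∀ i ω, Y i ω ∈ Icc (-K) K)
    (hupdate : ∀ i ω x, Y i (Function.update ω i x) = Y i ω)
    (hself : ∀ ω, ∑ i, (Z ω - Y i ω) ≤ Z ω)
    (hweight : ∀ i ω, 1 - t - b ≤ ∫ x, incrWeight t (Z (Function.update ω i x) - Y i ω) ∂ν i) :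
    t * deriv (cgf (-Z) (Measure.pi ν)) t - (1 - t - b) * cgf (-Z) (Measure.pi ν) t ≤ n * b := by
  set P := Measure.pi ν
  have hinterior : t ∈ interior (integrableExpSet (-Z) P) :=
    mem_interior_integrableExpSet_of_mem_Icc hZ.neg
      (fun ω => ⟨neg_le_neg (hZK ω).2, neg_le_neg (hZK ω).1⟩) t
  have hmgf : 0 < mgf (-Z) P t :=
    mgf_pos' (NeZero.ne P) (interior_subset (s := integrableExpSet (-Z) P) hinterior)
  have hentropy := mul_expEntropy_neg_mul_le ht hb htb hZ hY hZK hYK hupdate hself hweight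
  have hleft := expEntropy_const_mul hinterior
  have hright := integral_affine_mul_exp hinterior (n * b) (-(t * (t + b)))
  simp only [Pi.neg_apply, mul_neg, neg_mul, neg_neg] at hleft hright
  rw [hleft, hright, mul_left_comm] at hentropy
  linarith [le_of_mul_le_mul_left hentropy hmgf]

end DifferentialInequality

section Integration

lemma nonpos_of_mul_deriv_lt_self {u u' : ℝ → ℝ} {T : ℝ}
    (hu : ∀ t ∈ Icc 0 T, HasDerivAt u (u' t) t) (hu0 : u 0 = 0) (hu'0 : u' 0 ≤ 0)
    (hlt : ∀ t ∈ Ioo 0 T, 0 < u t → t * u' t < u t) {t : ℝ} (ht : t ∈ Icc 0 T) : u t ≤ 0 := by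
  have hline (ε : ℝ) (hε : 0 < ε) : u t ≤ ε * t := by
    refine image_le_of_deriv_right_lt_deriv_boundary (B := fun t => ε * t) (B' := fun _ => ε)
      (fun x hx => (hu x hx).continuousAt.continuousWithinAt)
      (fun x hx => (hu x (Ico_subset_Icc_self hx)).hasDerivWithinAt) (by simp [hu0])
      (fun x => by simpa using (hasDerivAt_id x).const_mul ε) (fun x hx hxu => ?_) ht
    rcases hx.1.eq_or_lt with rfl | hx0
    · exact hu'0.trans_lt hε
    · have := hlt x ⟨hx0, hx.2⟩ (hxu ▸ mul_pos hε hx0)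
      rw [hxu, mul_comm ε] at this
      exact lt_of_mul_lt_mul_left this hx0.le
  have hlim : Filter.Tendsto (fun ε => ε * t) (nhdsWithin 0 (Ioi 0)) (nhds 0) := by
    have : Continuous fun ε : ℝ => ε * t := by fun_prop
    simpa using (this.tendsto 0).mono_left nhdsWithin_le_nhds
  exact ge_of_tendsto hlim (eventually_nhdsWithin_of_forall hline)

lemma varianceLoss_mem_Icc {t : ℝ} (ht : t ∈ Icc 0 (1 / 2)) : varianceLoss t ∈ Icc 0 (t ^ 2) := by
  have ht0 := ht.1
  refine ⟨by unfold varianceLoss; positivity, ?_⟩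
  have := mul_nonneg (sq_nonneg t) (show 0 ≤ 1 / 2 - 5 / 8 * t by linarith [ht.2])
  unfold varianceLoss
  linarith

lemma mul_supersolution_le {E s M t : ℝ} (hE : 0 ≤ E) (hs : s ∈ Icc 0 1) (hM : 0 ≤ M)
    (ht : t ∈ Icc 0 (1 / 2)) :
    (1 - t - s * varianceLoss t) * (E * (t ^ 2 - t) + M * s * (t ^ 2 / 2 + t ^ 3 / 16)) +
        M * (s * varianceLoss t) ≤
      t * (E * (2 * t - 1) + M * s * (t + 3 * t ^ 2 / 16)) := by
  obtain ⟨hloss0, hloss⟩ := varianceLoss_mem_Icc ht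
  have hs0 := hs.1
  have ht0 := ht.1
  have hb : s * varianceLoss t * (1 - t) ≤ t ^ 2 :=
    calc s * varianceLoss t * (1 - t) ≤ s * varianceLoss t :=
          mul_le_of_le_one_right (by positivity) (by linarith)
      _ ≤ varianceLoss t := mul_le_of_le_one_left hloss0 hs.2
      _ ≤ t ^ 2 := hloss
  have hEterm : 0 ≤ E * t * (t ^ 2 - s * varianceLoss t * (1 - t)) :=
    mul_nonneg (by positivity) (sub_nonneg.2 hb)
  have hMterm : 0 ≤ M * s * (t ^ 4 / 16 + s * varianceLoss t * (t ^ 2 / 2 + t ^ 3 / 16)) := by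
    positivity
  have hsplit : t * (E * (2 * t - 1) + M * s * (t + 3 * t ^ 2 / 16)) -
      ((1 - t - s * varianceLoss t) * (E * (t ^ 2 - t) + M * s * (t ^ 2 / 2 + t ^ 3 / 16)) +
        M * (s * varianceLoss t)) =
      E * t * (t ^ 2 - s * varianceLoss t * (1 - t)) +
        M * s * (t ^ 4 / 16 + s * varianceLoss t * (t ^ 2 / 2 + t ^ 3 / 16)) := by
    unfold varianceLoss
    ring
  linarith

lemma le_add_of_mul_deriv_sub_le {Λ Λ' : ℝ → ℝ} {E s M : ℝ} (hE : 0 ≤ E) (hs : s ∈ Icc 0 1)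
    (hM : 0 ≤ M) (hΛ : ∀ t ∈ Icc 0 (1 / 2), HasDerivAt Λ (Λ' t) t) (hΛ0 : Λ 0 = 0)
    (hΛ'0 : Λ' 0 ≤ -E)
    (hode : ∀ t ∈ Ioo 0 (1 / 2),
      t * Λ' t - (1 - t - s * varianceLoss t) * Λ t ≤ M * (s * varianceLoss t))
    {t : ℝ} (ht : t ∈ Icc 0 (1 / 2)) :
    Λ t ≤ E * (t ^ 2 - t) + M * s * (t ^ 2 / 2 + t ^ 3 / 16) := by
  set A : ℝ → ℝ := fun t => E * (t ^ 2 - t) + M * s * (t ^ 2 / 2 + t ^ 3 / 16) with hAdef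
  set A' : ℝ → ℝ := fun t => E * (2 * t - 1) + M * s * (t + 3 * t ^ 2 / 16) with hA'def
  have hA (x : ℝ) : HasDerivAt A (A' x) x := by
    have := (((hasDerivAt_pow 2 x).sub (hasDerivAt_id x)).const_mul E).add
      ((((hasDerivAt_pow 2 x).div_const 2).add ((hasDerivAt_pow 3 x).div_const 16)).const_mul
        (M * s))
    refine this.congr_deriv ?_
    simp only [hA'def]
    norm_num
  refine sub_nonpos.1 (nonpos_of_mul_deriv_lt_self (u := fun t => Λ t - A t)
    (u' := fun t => Λ' t - A' t) (fun x hx => (hΛ x hx).sub (hA x)) (by simp [hΛ0, hAdef])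
    (by simp only [hA'def]; linarith) (fun x hx hpos => ?_) ht)
  have hx' := Ioo_subset_Icc_self hx
  have hsuper : (1 - x - s * varianceLoss x) * A x + M * (s * varianceLoss x) ≤ x * A' x :=
    mul_supersolution_le hE hs hM hx'
  linarith [hode x hx, mul_pos hx.1 hpos,
    mul_nonneg (mul_nonneg hs.1 (varianceLoss_mem_Icc hx').1) hpos.le]

end Integration

lemma exists_mem_Icc_mul_sq_eq {v x : ℝ} (hx : 0 ≤ x) (hxv : 8 * x < v) :
    ∃ t ∈ Icc 0 (1 / 2), v * t ^ 2 = 2 * x ∧ t * √(2 * v * x) = 2 * x := by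
  have hv : 0 < v := by linarith
  have hsq : v * √(2 * x / v) ^ 2 = 2 * x := by
    rw [sq_sqrt (by positivity)]
    field_simp
  refine ⟨√(2 * x / v), ⟨sqrt_nonneg _, ?_⟩, hsq, ?_⟩
  · rw [sqrt_le_left (by norm_num), div_le_iff₀ hv]
    linarith
  · have hsqrt : √(2 * v * x) = v * √(2 * x / v) := by
      rw [sqrt_eq_iff_mul_self_eq (by positivity) (by positivity)]
      linear_combination -v * hsq
    rw [hsqrt]
    linear_combination hsq

theorem measureReal_lt_sub_le_exp_neg {Ω : Type*} [MeasurableSpace Ω] {P : Measure Ω}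
    [IsFiniteMeasure P] {Z : Ω → ℝ} {E v x : ℝ} (hZ : ∀ ω, 0 ≤ Z ω)
    (h_int : ∀ t, Integrable (fun ω => exp (t * (-Z) ω)) P) (hEv : 2 * E ≤ v) (hx : 0 ≤ x)
    (hcgf : ∀ t ∈ Icc 0 (1 / 2), cgf (-Z) P t ≤ -(t * E) + v * t ^ 2 / 2 + v * t ^ 3 / 16) :
    P.real {ω | Z ω < E - (√(2 * v * x) + x / 8)} ≤ exp (-x) := by
  rcases le_or_gt v (8 * x) with hvx | hvx
  · have hsqrt : v / 2 ≤ √(2 * v * x) := by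
      rcases le_total v 0 with hv | hv
      · exact (by linarith : v / 2 ≤ 0).trans (sqrt_nonneg _)
      · exact le_sqrt_of_sq_le (by nlinarith)
    have hempty : {ω | Z ω < E - (√(2 * v * x) + x / 8)} = ∅ :=
      eq_empty_of_forall_notMem fun ω hω => by
        have := hZ ω
        have : Z ω < E - (√(2 * v * x) + x / 8) := hω
        linarith
    simpa [hempty] using (exp_pos (-x)).le
  · obtain ⟨t, ht, htsq, htsqrt⟩ := exists_mem_Icc_mul_sq_eq hx hvx
    have hsub : {ω | Z ω < E - (√(2 * v * x) + x / 8)} ⊆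
        {ω | √(2 * v * x) + x / 8 - E ≤ (-Z) ω} := fun ω hω => by
      have : Z ω < E - (√(2 * v * x) + x / 8) := hω
      change _ ≤ -Z ω
      linarith
    calc P.real {ω | Z ω < E - (√(2 * v * x) + x / 8)}
        ≤ P.real {ω | √(2 * v * x) + x / 8 - E ≤ (-Z) ω} := measureReal_mono hsub
      _ ≤ exp (-t * (√(2 * v * x) + x / 8 - E) + cgf (-Z) P t) :=
          measure_ge_le_exp_cgf _ ht.1 (h_int t)
      _ ≤ exp (-x) := by
          gcongr
          have hcube : v * t ^ 3 = 2 * x * t := by rw [← htsq]; ring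
          linarith [hcgf t ht]

/-- The supremum `sup_l ∑ k ∈ s, φ l (ω k)` over an indexed class of functions of the sum along
the coordinates in `s`. Erasing a coordinate from `s` gives the leave-one-out supremum. -/
def supSum {ι κ Ω : Type*} (φ : ι → Ω → ℝ) (s : Finset κ) (ω : κ → Ω) : ℝ :=
  ⨆ l, ∑ k ∈ s, φ l (ω k)

/-- The expectation of `supSum` over all coordinates of an i.i.d. sample of size `m` from `ν`. -/
def meanSupSum {ι Ω : Type*} [MeasurableSpace Ω] (φ : ι → Ω → ℝ) (m : ℕ) (ν : Measure Ω) : ℝ :=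
  ∫ ω, supSum φ Finset.univ ω ∂Measure.pi fun _ : Fin m => ν

section SupSum

variable {ι κ Ω : Type*} {φ : ι → Ω → ℝ} {B : ℝ}

lemma bddAbove_range_sum (hφB : ∀ l x, φ l x ≤ B) (s : Finset κ) (ω : κ → Ω) :
    BddAbove (range fun l => ∑ k ∈ s, φ l (ω k)) := by
  refine ⟨s.card * B, forall_mem_range.2 fun l => ?_⟩
  simpa using Finset.sum_le_card_nsmul s (fun k => φ l (ω k)) B fun k _ => hφB l (ω k)

lemma sum_le_supSum (hφB : ∀ l x, φ l x ≤ B) (s : Finset κ) (ω : κ → Ω) (l : ι) :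
    ∑ k ∈ s, φ l (ω k) ≤ supSum φ s ω :=
  le_ciSup (bddAbove_range_sum hφB s ω) l

lemma supSum_mem_Icc (hφB : ∀ l x, φ l x ≤ B) (hφ0 : ∃ l₀, ∀ x, φ l₀ x = 0) (s : Finset κ)
    (ω : κ → Ω) : supSum φ s ω ∈ Icc 0 (s.card * B) := by
  obtain ⟨l₀, hl₀⟩ := hφ0
  have : Nonempty ι := ⟨l₀⟩
  refine ⟨by simpa [hl₀] using sum_le_supSum hφB s ω l₀, ciSup_le fun l => ?_⟩
  simpa using Finset.sum_le_card_nsmul s (fun k => φ l (ω k)) B fun k _ => hφB l (ω k)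

lemma measurable_supSum [Countable ι] [MeasurableSpace Ω] (hφ : ∀ l, Measurable (φ l))
    (s : Finset κ) : Measurable (supSum φ s) :=
  Measurable.iSup fun l => Finset.measurable_sum _ fun k _ => (hφ l).comp (measurable_pi_apply k)

lemma supSum_const_mul {c : ℝ} (hc : 0 ≤ c) (s : Finset κ) (ω : κ → Ω) :
    supSum (fun l x => c * φ l x) s ω = c * supSum φ s ω := by
  simp only [supSum, ← Finset.mul_sum, Real.mul_iSup_of_nonneg hc]

lemma meanSupSum_const_mul [MeasurableSpace Ω] {ν : Measure Ω} {m : ℕ} {c : ℝ} (hc : 0 ≤ c) :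
    meanSupSum (fun l x => c * φ l x) m ν = c * meanSupSum φ m ν := by
  simp only [meanSupSum, supSum_const_mul hc, integral_const_mul]

variable [DecidableEq κ]

lemma sum_erase_update (s : Finset κ) (i : κ) (ω : κ → Ω) (x : Ω) (l : ι) :
    ∑ k ∈ s.erase i, φ l (Function.update ω i x k) = ∑ k ∈ s.erase i, φ l (ω k) :=
  Finset.sum_congr rfl fun k hk => by rw [Function.update_of_ne (Finset.ne_of_mem_erase hk)]

lemma supSum_erase_update (s : Finset κ) (i : κ) (ω : κ → Ω) (x : Ω) :
    supSum φ (s.erase i) (Function.update ω i x) = supSum φ (s.erase i) ω := by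
  simp only [supSum, sum_erase_update]

lemma supSum_le_supSum_erase_add [Nonempty ι] (hφB : ∀ l x, φ l x ≤ B) {s : Finset κ} {i : κ}
    (hi : i ∈ s) (ω : κ → Ω) : supSum φ s ω ≤ supSum φ (s.erase i) ω + B := by
  refine ciSup_le fun l => ?_
  rw [← Finset.sum_erase_add _ _ hi]
  exact add_le_add (sum_le_supSum hφB _ ω l) (hφB l _)

lemma sum_supSum_sub_erase_le (hφB : ∀ l x, φ l x ≤ B) (hφ0 : ∃ l₀, ∀ x, φ l₀ x = 0)
    (s : Finset κ) (ω : κ → Ω) :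
    ∑ i ∈ s, (supSum φ s ω - supSum φ (s.erase i) ω) ≤ supSum φ s ω := by
  rcases s.eq_empty_or_nonempty with rfl | hs
  · simpa using (supSum_mem_Icc hφB hφ0 ∅ ω).1
  have hcard : (1 : ℝ) ≤ s.card := by exact_mod_cast hs.card_pos
  have hsum (l : ι) : (s.card - 1 : ℝ) * ∑ k ∈ s, φ l (ω k) ≤ ∑ i ∈ s, supSum φ (s.erase i) ω :=
    calc (s.card - 1 : ℝ) * ∑ k ∈ s, φ l (ω k) = ∑ i ∈ s, (∑ k ∈ s, φ l (ω k) - φ l (ω i)) := by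
          simp only [Finset.sum_sub_distrib, Finset.sum_const, nsmul_eq_mul]
          ring
      _ = ∑ i ∈ s, ∑ k ∈ s.erase i, φ l (ω k) :=
          Finset.sum_congr rfl fun i hi => (Finset.sum_erase_eq_sub hi).symm
      _ ≤ ∑ i ∈ s, supSum φ (s.erase i) ω :=
          Finset.sum_le_sum fun i _ => sum_le_supSum hφB _ ω l
  have hsup : (s.card - 1 : ℝ) * supSum φ s ω ≤ ∑ i ∈ s, supSum φ (s.erase i) ω := by
    rw [supSum, Real.mul_iSup_of_nonneg (by linarith)]
    exact Real.iSup_le hsum (Finset.sum_nonneg fun i _ => (supSum_mem_Icc hφB hφ0 _ ω).1)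
  rw [Finset.sum_sub_distrib, Finset.sum_const, nsmul_eq_mul]
  linarith

lemma le_integral_incrWeight_supSum [Countable ι] [Nonempty ι] [MeasurableSpace Ω] {ν : Measure Ω}
    [IsProbabilityMeasure ν] {t c : ℝ} (hφ : ∀ l, Measurable (φ l)) (hφ1 : ∀ l x, |φ l x| ≤ 1)
    (hc : ∀ l, c ≤ ∫ x, incrWeight t (φ l x) ∂ν) {s : Finset κ} {i : κ} (hi : i ∈ s) (ω : κ → Ω) :
    c ≤ ∫ x, incrWeight t (supSum φ s (Function.update ω i x) - supSum φ (s.erase i) ω) ∂ν := by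
  have hφle l x : φ l x ≤ 1 := le_of_abs_le (hφ1 l x)
  refine le_integral_comp_of_forall_approx (A := -1) (continuous_incrWeight t)
    (monotoneOn_incrWeight t) (((measurable_supSum hφ s).comp (measurable_update ω)).sub_const _)
    (fun x => ?_) fun ε hε => ?_
  · have := supSum_le_supSum_erase_add hφle hi (Function.update ω i x)
    rw [supSum_erase_update] at this
    linarith
  · obtain ⟨l, hl⟩ : ∃ l, supSum φ (s.erase i) ω - ε < ∑ k ∈ s.erase i, φ l (ω k) :=
      exists_lt_of_lt_ciSup (sub_lt_self _ hε)
    refine ⟨φ l, hφ l, fun x => abs_le.1 (hφ1 l x), fun x => ?_, hc l⟩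
    have := sum_le_supSum hφle s (Function.update ω i x) l
    rw [← Finset.sum_erase_add _ _ hi, Function.update_self, sum_erase_update] at this
    linarith

end SupSum

section WimpyVariance

variable {ι X : Type*} [MeasurableSpace X] {μ : Measure X} {f : ι → X → ℝ} {C : ℝ}

lemma wimpyVar_const_mul (c : ℝ) :
    wimpyVar (fun l x => c * f l x) μ = c ^ 2 * wimpyVar f μ := by
  simp only [wimpyVar, mul_pow, integral_const_mul, Real.mul_iSup_of_nonneg (sq_nonneg c)]

variable [IsProbabilityMeasure μ]

lemma integral_sq_mem_Icc (hf : ∀ l x, |f l x| ≤ C) (l : ι) :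
    ∫ x, f l x ^ 2 ∂μ ∈ Icc 0 (C ^ 2) := by
  refine ⟨integral_nonneg fun x => sq_nonneg _, (le_abs_self _).trans ?_⟩
  have hsq (x : X) : ‖f l x ^ 2‖ ≤ C ^ 2 := by
    rw [norm_pow, norm_eq_abs]
    exact pow_le_pow_left₀ (abs_nonneg _) (hf l x) 2
  simpa using norm_integral_le_of_norm_le_const (μ := μ) (ae_of_all _ hsq)

lemma wimpyVar_mem_Icc (hf : ∀ l x, |f l x| ≤ C) : wimpyVar f μ ∈ Icc 0 (C ^ 2) :=
  ⟨Real.iSup_nonneg fun l => (integral_sq_mem_Icc hf l).1,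
    Real.iSup_le (fun l => (integral_sq_mem_Icc hf l).2) (sq_nonneg C)⟩

lemma integral_sq_le_wimpyVar (hf : ∀ l x, |f l x| ≤ C) (l : ι) :
    ∫ x, f l x ^ 2 ∂μ ≤ wimpyVar f μ :=
  le_ciSup (f := fun l => ∫ x, f l x ^ 2 ∂μ)
    ⟨C ^ 2, forall_mem_range.2 fun l => (integral_sq_mem_Icc hf l).2⟩ l

end WimpyVariance

section LowerTail

variable {ι Ω : Type*} [MeasurableSpace Ω] {φ : ι → Ω → ℝ} {ν : Measure Ω}
  [IsProbabilityMeasure ν]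

lemma one_sub_sub_le_integral_incrWeight {t : ℝ} (ht : t ∈ Icc 0 (1 / 2))
    (hφ : ∀ l, Measurable (φ l)) (hφ1 : ∀ l x, |φ l x| ≤ 1)
    (hsymm : ∀ l, IdentDistrib (φ l) (-φ l) ν ν) (l : ι) :
    1 - t - wimpyVar φ ν * varianceLoss t ≤ ∫ x, incrWeight t (φ l x) ∂ν := by
  have hincr := le_integral_incrWeight_of_identDistrib_neg ht (hφ l) (hφ1 l) (hsymm l)
  have := mul_le_mul_of_nonneg_left (integral_sq_le_wimpyVar (μ := ν) hφ1 l)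
    (varianceLoss_mem_Icc ht).1
  linarith

variable [Countable ι]

theorem cgf_neg_supSum_le {m : ℕ} (hφ : ∀ l, Measurable (φ l)) (hφ1 : ∀ l x, |φ l x| ≤ 1)
    (hφ0 : ∃ l₀, ∀ x, φ l₀ x = 0) (hsymm : ∀ l, IdentDistrib (φ l) (-φ l) ν ν)
    {t : ℝ} (ht : t ∈ Icc 0 (1 / 2)) :
    cgf (-supSum φ Finset.univ) (Measure.pi fun _ : Fin m => ν) t ≤
      meanSupSum φ m ν * (t ^ 2 - t) + m * wimpyVar φ ν * (t ^ 2 / 2 + t ^ 3 / 16) := by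
  set Z : (Fin m → Ω) → ℝ := supSum φ Finset.univ
  set P := Measure.pi fun _ : Fin m => ν
  have hφle l x : φ l x ≤ 1 := le_of_abs_le (hφ1 l x)
  have : Nonempty ι := ⟨hφ0.choose⟩
  have hbound (s : Finset (Fin m)) (ω : Fin m → Ω) : supSum φ s ω ∈ Icc (-m : ℝ) m := by
    have hmem := supSum_mem_Icc hφle hφ0 s ω
    have hcard : (s.card : ℝ) ≤ m := by exact_mod_cast card_finset_fin_le s
    exact ⟨by linarith [hmem.1, hmem.2], by linarith [hmem.2]⟩
  have hinterior (r : ℝ) : r ∈ interior (integrableExpSet (-Z) P) :=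
    mem_interior_integrableExpSet_of_mem_Icc (measurable_supSum hφ _).neg
      (fun ω => ⟨neg_le_neg (hbound _ ω).2, neg_le_neg (hbound _ ω).1⟩) r
  have hwimpy : wimpyVar φ ν ∈ Icc 0 1 := by simpa using wimpyVar_mem_Icc (μ := ν) hφ1
  refine le_add_of_mul_deriv_sub_le (Λ' := deriv (cgf (-Z) P)) (integral_nonneg fun ω =>
    (supSum_mem_Icc hφle hφ0 _ ω).1) hwimpy m.cast_nonneg
    (fun r _ => (analyticAt_cgf (hinterior r)).differentiableAt.hasDerivAt) cgf_zero
    (by simp [deriv_cgf_zero (hinterior 0), integral_neg, Z, P]) (fun r hr => ?_) ht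
  have hr' := Ioo_subset_Icc_self hr
  have hloss := varianceLoss_mem_Icc hr'
  have hb : wimpyVar φ ν * varianceLoss r ≤ r ^ 2 :=
    (mul_le_of_le_one_left hloss.1 hwimpy.2).trans hloss.2
  exact mul_deriv_cgf_neg_sub_le hr.1.le (mul_nonneg hwimpy.1 hloss.1)
    (by nlinarith [hr.1, hr.2]) (measurable_supSum hφ _) (fun i => measurable_supSum hφ _)
    (hbound _) (fun i => hbound (Finset.univ.erase i)) (supSum_erase_update _)
    (sum_supSum_sub_erase_le hφle hφ0 _) fun i =>
      le_integral_incrWeight_supSum hφ hφ1 (one_sub_sub_le_integral_incrWeight hr' hφ hφ1 hsymm)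
        (Finset.mem_univ i)

lemma measureReal_supSum_lt_le_exp_neg_of_abs_le_one {m : ℕ} {x : ℝ} (hφ : ∀ l, Measurable (φ l))
    (hφ1 : ∀ l x, |φ l x| ≤ 1) (hφ0 : ∃ l₀, ∀ x, φ l₀ x = 0)
    (hsymm : ∀ l, IdentDistrib (φ l) (-φ l) ν ν) (hx : 0 ≤ x) :
    (Measure.pi fun _ : Fin m => ν).real {ω | supSum φ Finset.univ ω < meanSupSum φ m ν -
      (√(2 * (2 * meanSupSum φ m ν + m * wimpyVar φ ν) * x) + x / 8)} ≤ exp (-x) := by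
  have hmem := supSum_mem_Icc (κ := Fin m) (fun l x => le_of_abs_le (hφ1 l x)) hφ0 Finset.univ
  have hmean : 0 ≤ meanSupSum φ m ν := integral_nonneg fun ω => (hmem ω).1
  have hms : 0 ≤ m * wimpyVar φ ν := mul_nonneg m.cast_nonneg (wimpyVar_mem_Icc hφ1).1
  refine measureReal_lt_sub_le_exp_neg (fun ω => (hmem ω).1) (fun t => ?_) (by linarith) hx
    fun t ht => (cgf_neg_supSum_le hφ hφ1 hφ0 hsymm ht).trans ?_
  · exact integrable_exp_mul_of_mem_Icc (measurable_supSum hφ _).neg.aemeasurable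
      (ae_of_all _ fun ω => ⟨neg_le_neg (hmem ω).2, neg_le_neg (hmem ω).1⟩)
  · have : 0 ≤ meanSupSum φ m ν * t ^ 3 := mul_nonneg hmean (pow_nonneg ht.1 3)
    linarith

theorem measureReal_supSum_lt_le_exp_neg {m : ℕ} {C x : ℝ} (hC : 0 < C)
    (hφ : ∀ l, Measurable (φ l)) (hφC : ∀ l x, |φ l x| ≤ C) (hφ0 : ∃ l₀, ∀ x, φ l₀ x = 0)
    (hsymm : ∀ l, IdentDistrib (φ l) (-φ l) ν ν) (hx : 0 ≤ x) :
    (Measure.pi fun _ : Fin m => ν).real {ω | supSum φ Finset.univ ω < meanSupSum φ m ν -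
      (√(2 * (2 * C * meanSupSum φ m ν + m * wimpyVar φ ν) * x) + C * x / 8)} ≤ exp (-x) := by
  set ψ : ι → Ω → ℝ := fun l x => C⁻¹ * φ l x with hψ
  have hψ1 (l : ι) (x : Ω) : |ψ l x| ≤ 1 := by
    rw [hψ, abs_mul, abs_of_pos (inv_pos.2 hC)]
    exact (inv_mul_le_one₀ hC).2 (hφC l x)
  have hψsymm (l : ι) : IdentDistrib (ψ l) (-ψ l) ν ν := by
    convert! (hsymm l).comp (measurable_const_mul C⁻¹) using 1
    ext x
    simp [hψ]
  have htail := measureReal_supSum_lt_le_exp_neg_of_abs_le_one (m := m)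
    (fun l => (hφ l).const_mul C⁻¹) hψ1 (hφ0.imp fun l₀ hl₀ x => by simp [hl₀]) hψsymm hx
  have hC0 : 0 ≤ C⁻¹ := (inv_pos.2 hC).le
  have hvar : 2 * (2 * (C⁻¹ * meanSupSum φ m ν) + m * (C⁻¹ ^ 2 * wimpyVar φ ν)) * x =
      C⁻¹ ^ 2 * (2 * (2 * C * meanSupSum φ m ν + m * wimpyVar φ ν) * x) := by
    field_simp
  rw [meanSupSum_const_mul hC0, wimpyVar_const_mul, hvar, sqrt_mul (sq_nonneg _),
    sqrt_sq hC0] at htail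
  refine le_of_eq_of_le ?_ htail
  congr 1
  ext ω
  rw [mem_ofPred_eq, mem_ofPred_eq, supSum_const_mul hC0, ← mul_lt_mul_iff_right₀ (inv_pos.2 hC)]
  congr! 1
  field_simp

end LowerTail

/-- The law of a uniform random sign, encoded by a Boolean as in `sgnB`. -/
def signMeasure : Measure Bool := (PMF.uniformOfFintype Bool).toMeasure

instance : IsProbabilityMeasure signMeasure := by unfold signMeasure; infer_instance

instance (n m : ℕ) : IsProbabilityMeasure (radMeasure n m) := by unfold radMeasure; infer_instance

lemma measurePreserving_not : MeasurePreserving Bool.not signMeasure signMeasure := by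
  refine ⟨measurable_of_countable _, Measure.ext_of_singleton fun c => ?_⟩
  rw [Measure.map_apply (measurable_of_countable _) (measurableSet_singleton c)]
  have hpreimage : Bool.not ⁻¹' {c} = {!c} := by ext; simp [Bool.not_eq_eq_eq_not]
  simp [hpreimage, signMeasure]

lemma measurePreserving_radMeasure (m : ℕ) :
    MeasurePreserving (fun σ : Fin 1 → Fin m → Bool => σ 0) (radMeasure 1 m)
      (Measure.pi fun _ : Fin m => signMeasure) := by
  refine ⟨measurable_pi_apply 0, Measure.ext_of_singleton fun c => ?_⟩
  rw [Measure.map_apply (measurable_pi_apply 0) (measurableSet_singleton c),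
    Measure.pi_singleton]
  have hpreimage : (fun σ : Fin 1 → Fin m → Bool => σ 0) ⁻¹' {c} = {fun _ => c} := by
    ext σ
    simp [funext_iff (f := σ), Fin.forall_fin_one]
  rw [hpreimage, radMeasure, signMeasure,
    PMF.toMeasure_apply_singleton _ _ (measurableSet_singleton _)]
  simp [ENNReal.inv_pow]

section SignedClass

variable {X ι : Type*} {f : ι → X → ℝ}

/-- The class of signed functions `(x, σ) ↦ σ f(x)` for `f` in the given class; an empirical
Rademacher average is the supremum over it of an empirical mean. -/
def signedClass (f : ι → X → ℝ) (l : ι) (p : X × Bool) : ℝ :=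
  sgnB p.2 * f l p.1

/-- Attaches to each sample point its sign. -/
def signedSample {m : ℕ} (p : (Fin m → X) × (Fin 1 → Fin m → Bool)) (k : Fin m) : X × Bool :=
  (p.1 k, p.2 0 k)

lemma abs_signedClass (l : ι) (p : X × Bool) : |signedClass f l p| = |f l p.1| := by
  rcases p with ⟨x, _ | _⟩ <;> simp [signedClass, sgnB]

lemma mcera_eq_supSum {m : ℕ} (S : Fin m → X) (σ : Fin 1 → Fin m → Bool) :
    mcera f 1 m S σ = (m : ℝ)⁻¹ * supSum (signedClass f) Finset.univ (signedSample (S, σ)) := by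
  simp [mcera, supSum, signedClass, signedSample, Real.mul_iSup_of_nonneg]

variable [MeasurableSpace X] {μ : Measure X}

lemma measurable_signedClass (hf : ∀ l, Measurable (f l)) (l : ι) :
    Measurable (signedClass f l) :=
  ((measurable_of_countable sgnB).comp measurable_snd).mul ((hf l).comp measurable_fst)

variable [IsProbabilityMeasure μ]

lemma measurePreserving_signedSample (m : ℕ) :
    MeasurePreserving signedSample ((Measure.pi fun _ : Fin m => μ).prod (radMeasure 1 m))
      (Measure.pi fun _ : Fin m => μ.prod signMeasure) :=
  (measurePreserving_arrowProdEquivProdArrow X Bool (Fin m) (fun _ => μ)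
    (fun _ => signMeasure)).symm.comp
    ((MeasurePreserving.id _).prod (measurePreserving_radMeasure m))

lemma identDistrib_signedClass_neg (hf : ∀ l, Measurable (f l)) (l : ι) :
    IdentDistrib (signedClass f l) (-signedClass f l) (μ.prod signMeasure)
      (μ.prod signMeasure) := by
  have hmeas := measurable_signedClass hf l
  have hflip := (MeasurePreserving.id μ).prod measurePreserving_not
  have hneg : -signedClass f l = signedClass f l ∘ Prod.map id Bool.not := by
    ext ⟨x, _ | _⟩ <;> simp [signedClass, sgnB]
  refine ⟨hmeas.aemeasurable, hmeas.neg.aemeasurable, ?_⟩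
  rw [hneg, ← Measure.map_map hmeas hflip.measurable, hflip.map_eq]

lemma wimpyVar_signedClass :
    wimpyVar (signedClass f) (μ.prod signMeasure) = wimpyVar f μ := by
  have hsq (l : ι) (p : X × Bool) : signedClass f l p ^ 2 = f l p.1 ^ 2 := by
    rw [← sq_abs, abs_signedClass, sq_abs]
  simp only [wimpyVar, hsq]
  congr! 2 with l
  rw [integral_fun_fst (fun x => f l x ^ 2), probReal_univ, one_smul]

lemma rc_eq_meanSupSum [Countable ι] {z : ℝ} (hf : ∀ l, Measurable (f l))
    (hfz : ∀ l x, |f l x| ≤ z) (hf0 : ∃ l₀, ∀ x, f l₀ x = 0) (m : ℕ) :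
    rc f 1 m μ = (m : ℝ)⁻¹ * meanSupSum (signedClass f) m (μ.prod signMeasure) := by
  have hpair := measurePreserving_signedSample (μ := μ) m
  have hmeas := measurable_supSum (κ := Fin m) (measurable_signedClass hf) Finset.univ
  have h_int : Integrable (supSum (signedClass f) Finset.univ)
      (Measure.pi fun _ : Fin m => μ.prod signMeasure) :=
    .of_mem_Icc 0 _ hmeas.aemeasurable (ae_of_all _ (supSum_mem_Icc
      (fun l p => (le_abs_self _).trans ((abs_signedClass l p).trans_le (hfz l p.1)))
      (hf0.imp fun l₀ hl₀ p => by simp [signedClass, hl₀]) _))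
  simp only [rc, era, mcera_eq_supSum, integral_const_mul]
  rw [meanSupSum, ← hpair.hasLaw.integral_comp hmeas.aestronglyMeasurable,
    integral_prod _ (hpair.integrable_comp_of_integrable h_int)]
  rfl

theorem measureReal_mcera_add_lt_rc_le_exp_neg [Countable ι] {z x : ℝ} {m : ℕ} (hm : 0 < m)
    (hz : 0 < z) (hf : ∀ l, Measurable (f l)) (hfz : ∀ l x, |f l x| ≤ z)
    (hf0 : ∃ l₀, ∀ x, f l₀ x = 0) (hx : 0 ≤ x) :
    ((Measure.pi fun _ : Fin m => μ).prod (radMeasure 1 m)).real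
      {p | mcera f 1 m p.1 p.2 + √(2 * (2 * z * rc f 1 m μ + wimpyVar f μ) * x / m) +
        z * x / (8 * m) < rc f 1 m μ} ≤ exp (-x) := by
  have htail := measureReal_supSum_lt_le_exp_neg (m := m) hz (measurable_signedClass hf)
    (fun l p => (abs_signedClass l p).trans_le (hfz l p.1))
    (hf0.imp fun l₀ hl₀ p => by simp [signedClass, hl₀])
    (identDistrib_signedClass_neg (μ := μ) hf) hx
  rw [wimpyVar_signedClass] at htail
  rw [← (measurePreserving_signedSample m).measureReal_preimage
    (measurableSet_lt (measurable_supSum (measurable_signedClass hf) _)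
      measurable_const).nullMeasurableSet] at htail
  have hm' : (0 : ℝ) < m := by exact_mod_cast hm
  set E := meanSupSum (signedClass f) m (μ.prod signMeasure)
  have hsqrt : √(2 * (2 * z * ((m : ℝ)⁻¹ * E) + wimpyVar f μ) * x / m) =
      (m : ℝ)⁻¹ * √(2 * (2 * z * E + m * wimpyVar f μ) * x) := by
    rw [← sqrt_sq (inv_pos.2 hm').le, ← sqrt_mul (sq_nonneg _), sqrt_sq (inv_pos.2 hm').le]
    congr 1
    field_simp
  refine le_of_eq_of_le ?_ htail
  congr 1
  ext p
  have hscale (Z r : ℝ) :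
      (m : ℝ)⁻¹ * Z + (m : ℝ)⁻¹ * r + z * x / (8 * m) = (m : ℝ)⁻¹ * (Z + (r + z * x / 8)) := by
    field_simp
    ring
  rw [mem_preimage, mem_ofPred_eq, mem_ofPred_eq, rc_eq_meanSupSum hf hfz hf0, hsqrt,
    mcera_eq_supSum, hscale, mul_lt_mul_iff_right₀ (inv_pos.2 hm'), lt_sub_iff_add_lt]

end SignedClass

lemma one_sub_measureReal_compl_le {Ω : Type*} [MeasurableSpace Ω] {P : Measure Ω}
    [IsProbabilityMeasure P] (s : Set Ω) : 1 - P.real sᶜ ≤ P.real s := by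
  have := measureReal_union_le (μ := P) s sᶜ
  rw [union_compl_self, probReal_univ] at this
  linarith

theorem stmt_9 {X : Type*} [MeasurableSpace X] {ι : Type*} [Countable ι]
    (f : ι → X → ℝ) (a b : ℝ) (ha : a ≤ 0) (hb : 0 < b)
    (hmeas : ∀ l : ι, Measurable (f l))
    (hrange : ∀ (l : ι) (x : X), f l x ∈ Set.Icc a b)
    (hzero : ∃ l₀ : ι, ∀ x : X, f l₀ x = 0)
    (μ : Measure X) [IsProbabilityMeasure μ] (m : ℕ) (hm : 0 < m)
    (δ : ℝ) (hδ : δ ∈ Set.Ioo (0 : ℝ) 1) :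
    1 - δ ≤ (((Measure.pi fun _ : Fin m => μ).prod (radMeasure 1 m))
        {p : (Fin m → X) × (Fin 1 → Fin m → Bool) |
          rc f 1 m μ ≤ mcera f 1 m p.1 p.2 +
            Real.sqrt (2 * (2 * max |a| |b| * rc f 1 m μ + wimpyVar f μ) *
              Real.log (1 / δ) / m) +
            max |a| |b| * Real.log (1 / δ) / (8 * m)}).toReal := by
  have hz : 0 < max |a| |b| := lt_max_of_lt_right (abs_pos.2 hb.ne')
  have hlog : 0 ≤ log (1 / δ) := log_nonneg ((one_le_div hδ.1).2 hδ.2.le)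
  have hexp : exp (-log (1 / δ)) = δ := by rw [one_div, log_inv, neg_neg, exp_log hδ.1]
  have htail := measureReal_mcera_add_lt_rc_le_exp_neg (μ := μ) hm hz hmeas
    (fun l x => abs_le_max_abs_abs (hrange l x).1 (hrange l x).2) hzero hlog
  rw [hexp] at htail
  refine le_trans (sub_le_sub_left ?_ 1) (one_sub_measureReal_compl_le _)
  simpa only [compl_ofPred, not_le] using htail
end
end

section
/- Let S = (s_1,…,s_m) be m i.i.d. samples from μ. For all 0 < ε ≤ σ²_F, Pr_S( σ²_F ≥ σ̂²_F(S) + ε ) ≤ exp( − ( m σ²_F / z² ) · h( − ε / σ²_F ) ) ≤ exp( − m ε² / ( 2 z² σ²_F ) ), where h(x) = (1+x)ln(1+x) − x. -/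
open MeasureTheory

noncomputable section

/-!
The event `σ²_F ≥ σ̂²_F(S) + ε` lies in the lower tail `∑ k, f l (S k) ^ 2 ≤ m (σ²_F - ε)` of every
single member `f l` of the class, so no concentration of suprema is needed. A variable with values
in `[0, w]` has a moment generating function dominated by that of `w` times a Poisson variable with
the same mean, which gives a Chernoff bound for each `l`. For a fixed Chernoff parameter this bound
is continuous in `E_μ[(f l)²]`, so that expectation may be replaced by its supremum `σ²_F`; only
then is the parameter optimised. Here `h` appears because `L ↦ exp L - 1` has Legendre transform
`y ↦ h(y - 1)`.
Finally `h(x) ≥ x² / 2` on `[-1, 0]` is `sinh r ≤ r` at `r = log (1 + x) ≤ 0`.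
-/

section

open ProbabilityTheory Real Set Filter

lemma sq_div_two_le_hfun {x : ℝ} (hx : -1 ≤ x) (hx0 : x ≤ 0) : x ^ 2 / 2 ≤ hfun x := by
  rcases hx.eq_or_lt with rfl | hx
  · norm_num [hfun]
  have hy : 0 < 1 + x := by linarith
  have hsinh : ((1 + x) - (1 + x)⁻¹) / 2 ≤ log (1 + x) := by
    rw [← sinh_log hy, sinh_le_self_iff]
    exact log_nonpos hy.le (by linarith)
  calc x ^ 2 / 2 = (1 + x) * (((1 + x) - (1 + x)⁻¹) / 2) - x := by field_simp; ring
    _ ≤ hfun x := by unfold hfun; gcongr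

lemma mul_sub_exp_sub_one_le_hfun {x : ℝ} (hx : -1 ≤ x) (L : ℝ) :
    (1 + x) * L - (exp L - 1) ≤ hfun x := by
  unfold hfun
  rcases hx.eq_or_lt with rfl | hx
  · simpa using (exp_pos L).le
  have hy : 0 < 1 + x := by linarith
  have htangent : (1 + x) * (L - log (1 + x) + 1) ≤ exp L := by
    calc (1 + x) * (L - log (1 + x) + 1) ≤ (1 + x) * exp (L - log (1 + x)) := by
          gcongr
          exact add_one_le_exp _
      _ = exp L := by rw [exp_sub, exp_log hy, mul_div_cancel₀ _ hy.ne']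
  linarith

lemma isLUB_hfun {x : ℝ} (hx : -1 ≤ x) (hx0 : x ≤ 0) :
    IsLUB ((fun L ↦ (1 + x) * L - (exp L - 1)) '' Iic 0) (hfun x) := by
  refine isLUB_of_mem_closure
    (forall_mem_image.2 fun L _ ↦ mul_sub_exp_sub_one_le_hfun hx L) ?_
  rcases hx.eq_or_lt with rfl | hx
  -- At `x = -1` the supremum is only approached, as `L → -∞`.
  · have hlim : Tendsto (fun L ↦ (1 + -1) * L - (exp L - 1)) atBot (nhds (hfun (-1))) := by
      simpa [hfun] using tendsto_exp_atBot.const_sub 1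
    exact mem_closure_of_tendsto hlim
      ((eventually_le_atBot 0).mono fun L hL ↦ mem_image_of_mem _ hL)
  · have hy : 0 < 1 + x := by linarith
    refine subset_closure ⟨log (1 + x), log_nonpos hy.le (by linarith), ?_⟩
    simp only [hfun, exp_log hy]
    ring

section Chernoff

variable {Ω : Type*} [MeasurableSpace Ω] {P : Measure Ω} {w : ℝ}

lemma mgf_le_exp_integral_mul_of_mem_Icc [IsProbabilityMeasure P] {Y : Ω → ℝ} (hw : 0 < w)
    (hmeas : AEMeasurable Y P) (hY : ∀ᵐ ω ∂P, Y ω ∈ Icc 0 w) (t : ℝ) :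
    mgf Y P t ≤ exp (P[Y] / w * (exp (t * w) - 1)) := by
  have hint : Integrable (fun ω ↦ Y ω / w * (exp (t * w) - 1)) P :=
    ((Integrable.of_mem_Icc 0 w hmeas hY).div_const w).mul_const _
  have hbernoulli : ∀ᵐ ω ∂P, exp (t * Y ω) ≤ 1 + Y ω / w * (exp (t * w) - 1) := by
    filter_upwards [hY] with ω ⟨h0, h1⟩
    have h := rpow_one_add_le_one_add_mul_self (s := exp (t * w) - 1)
      (by linarith [exp_pos (t * w)]) (div_nonneg h0 hw.le) ((div_le_one hw).2 h1)
    rwa [add_sub_cancel, ← exp_mul, mul_assoc, mul_div_cancel₀ _ hw.ne'] at h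
  calc mgf Y P t ≤ ∫ ω, (1 + Y ω / w * (exp (t * w) - 1)) ∂P :=
        integral_mono_ae (integrable_exp_mul_of_mem_Icc hmeas hY)
          ((integrable_const 1).add hint) hbernoulli
    _ = P[Y] / w * (exp (t * w) - 1) + 1 := by
        rw [integral_add (integrable_const 1) hint, integral_mul_const, integral_div]
        simp [add_comm]
    _ ≤ exp (P[Y] / w * (exp (t * w) - 1)) := add_one_le_exp _

lemma measureReal_sum_le_le_exp_of_iIndepFun {κ : Type*} {Y : κ → Ω → ℝ} (hindep : iIndepFun Y P)
    (hw : 0 < w) (hmeas : ∀ i, AEMeasurable (Y i) P) (hY : ∀ i, ∀ᵐ ω ∂P, Y i ω ∈ Icc 0 w)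
    (s : Finset κ) {t : ℝ} (ht : t ≤ 0) (r : ℝ) :
    P.real {ω | ∑ i ∈ s, Y i ω ≤ r} ≤
      exp (-t * r + (∑ i ∈ s, P[Y i]) / w * (exp (t * w) - 1)) := by
  have := hindep.isProbabilityMeasure
  have hsum : ∀ᵐ ω ∂P, (∑ i ∈ s, Y i) ω ∈ Icc 0 (∑ _i ∈ s, w) := by
    filter_upwards [(ae_ball_iff s.countable_toSet).2 fun i _ ↦ hY i] with ω hω
    rw [Finset.sum_apply]
    exact ⟨Finset.sum_nonneg fun i hi ↦ (hω i hi).1, Finset.sum_le_sum fun i hi ↦ (hω i hi).2⟩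
  have hint : Integrable (fun ω ↦ exp (t * (∑ i ∈ s, Y i) ω)) P :=
    integrable_exp_mul_of_mem_Icc (by fun_prop) hsum
  calc P.real {ω | ∑ i ∈ s, Y i ω ≤ r}
      ≤ exp (-t * r) * mgf (∑ i ∈ s, Y i) P t := by
        simpa only [Finset.sum_apply] using measure_le_le_exp_mul_mgf r ht hint
    _ = exp (-t * r) * ∏ i ∈ s, mgf (Y i) P t := by rw [hindep.mgf_sum₀ hmeas]
    _ ≤ exp (-t * r) * ∏ i ∈ s, exp (P[Y i] / w * (exp (t * w) - 1)) := by
        gcongr with i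
        · exact fun i _ ↦ mgf_nonneg
        · exact mgf_le_exp_integral_mul_of_mem_Icc hw (hmeas i) (hY i) t
    _ = exp (-t * r + (∑ i ∈ s, P[Y i]) / w * (exp (t * w) - 1)) := by
        rw [← exp_sum, ← exp_add, Finset.sum_div, Finset.sum_mul]

lemma measureReal_pi_sum_le_le_exp {κ : Type*} [Fintype κ] [IsProbabilityMeasure P] {q : Ω → ℝ}
    (hw : 0 < w) (hmeas : AEMeasurable q P) (hq : ∀ᵐ x ∂P, q x ∈ Icc 0 w)
    {t : ℝ} (ht : t ≤ 0) (r : ℝ) :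
    (Measure.pi fun _ : κ ↦ P).real {S | ∑ k, q (S k) ≤ r} ≤
      exp (-t * r + Fintype.card κ * P[q] / w * (exp (t * w) - 1)) := by
  have heval (k : κ) := Measure.quasiMeasurePreserving_eval (fun _ : κ ↦ P) k
  simpa [integral_comp_eval (μ := fun _ : κ ↦ P) hmeas.aestronglyMeasurable] using
    measureReal_sum_le_le_exp_of_iIndepFun (iIndepFun_pi fun _ : κ ↦ hmeas) hw
      (fun k ↦ hmeas.comp_quasiMeasurePreserving (heval k)) (fun k ↦ (heval k).ae hq)
      Finset.univ ht r

end Chernoff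

section WimpyVariance

variable {X ι : Type*} {f : ι → X → ℝ} {z : ℝ}

lemma sum_sq_le_mul_sigma2hat (hf : ∀ l x, |f l x| ≤ z) {m : ℕ} (hm : 0 < m) (S : Fin m → X)
    (l : ι) : ∑ k, f l (S k) ^ 2 ≤ m * sigma2hat f S := by
  have hbdd : BddAbove (range fun l ↦ ∑ k, f l (S k) ^ 2) :=
    ⟨∑ _k : Fin m, z ^ 2, forall_mem_range.2 fun l ↦
      Finset.sum_le_sum fun k _ ↦ sq_le_sq.2 ((hf l (S k)).trans (le_abs_self z))⟩
  rw [sigma2hat, mul_inv_cancel_left₀ (by positivity)]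
  exact le_ciSup hbdd l

variable [MeasurableSpace X] {μ : Measure X} [IsProbabilityMeasure μ] [Nonempty ι]

lemma wimpyVar_mem_closure_range (hf : ∀ l x, |f l x| ≤ z) :
    wimpyVar f μ ∈ closure (range fun l ↦ ∫ x, f l x ^ 2 ∂μ) := by
  refine csSup_mem_closure (range_nonempty _) ⟨z ^ 2, forall_mem_range.2 fun l ↦ ?_⟩
  have hsq (x : X) : f l x ^ 2 ≤ z ^ 2 := sq_le_sq.2 ((hf l x).trans (le_abs_self z))
  simpa using integral_mono_of_nonneg (μ := μ) (ae_of_all _ fun x ↦ sq_nonneg (f l x))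
    (integrable_const (z ^ 2)) (ae_of_all _ hsq)

lemma measureReal_sigma2hat_add_le_wimpyVar_le_exp (hz : 0 < z)
    (hmeas : ∀ l, AEMeasurable (f l) μ) (hf : ∀ l x, |f l x| ≤ z) {m : ℕ} (hm : 0 < m)
    (ε : ℝ) {L : ℝ} (hL : L ≤ 0) :
    (Measure.pi fun _ : Fin m ↦ μ).real {S | wimpyVar f μ ≥ sigma2hat f S + ε} ≤
      exp (-(m / z ^ 2) * ((wimpyVar f μ - ε) * L - wimpyVar f μ * (exp L - 1))) := by
  set V := wimpyVar f μ
  have hmember (l : ι) : (Measure.pi fun _ : Fin m ↦ μ).real {S | V ≥ sigma2hat f S + ε} ≤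
      exp (-(m / z ^ 2) * ((V - ε) * L - (∫ x, f l x ^ 2 ∂μ) * (exp L - 1))) := by
    have hsub : {S : Fin m → X | V ≥ sigma2hat f S + ε} ⊆
        {S | ∑ k, f l (S k) ^ 2 ≤ m * (V - ε)} := fun S (hS : sigma2hat f S + ε ≤ V) ↦
      (sum_sq_le_mul_sigma2hat hf hm S l).trans (by gcongr; linarith)
    have hsq (x : X) : f l x ^ 2 ∈ Icc 0 (z ^ 2) :=
      ⟨sq_nonneg _, sq_le_sq.2 ((hf l x).trans (le_abs_self z))⟩
    refine (measureReal_mono hsub).trans <|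
      (measureReal_pi_sum_le_le_exp (by positivity) ((hmeas l).pow_const 2) (ae_of_all _ hsq)
        (div_nonpos_of_nonpos_of_nonneg hL (sq_nonneg z)) _).trans_eq ?_
    rw [div_mul_cancel₀ L (by positivity), Fintype.card_fin]
    ring_nf
  exact le_on_closure (forall_mem_range.2 hmember) continuousOn_const
    (g := fun v ↦ exp (-(m / z ^ 2) * ((V - ε) * L - v * (exp L - 1))))
    (by fun_prop) (wimpyVar_mem_closure_range hf)

theorem stmt_11_general (hz : 0 < z) (hmeas : ∀ l, AEMeasurable (f l) μ)
    (hf : ∀ l x, |f l x| ≤ z) {m : ℕ} (hm : 0 < m) {ε : ℝ} (hε0 : 0 < ε)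
    (hε : ε ≤ wimpyVar f μ) :
    (Measure.pi fun _ : Fin m ↦ μ).real {S | wimpyVar f μ ≥ sigma2hat f S + ε} ≤
      exp (-(m * wimpyVar f μ / z ^ 2) * hfun (-ε / wimpyVar f μ)) ∧
    exp (-(m * wimpyVar f μ / z ^ 2) * hfun (-ε / wimpyVar f μ)) ≤
      exp (-(m * ε ^ 2) / (2 * z ^ 2 * wimpyVar f μ)) := by
  have hchernoff := fun L (hL : L ≤ 0) ↦
    measureReal_sigma2hat_add_le_wimpyVar_le_exp hz hmeas hf hm ε hL
  set V := wimpyVar f μ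
  have hV : 0 < V := hε0.trans_le hε
  have hx : -1 ≤ -ε / V := by rwa [le_div_iff₀ hV, neg_one_mul, neg_le_neg_iff]
  have hx0 : -ε / V ≤ 0 := div_nonpos_of_nonpos_of_nonneg (by linarith) hV.le
  constructor
  · refine le_on_closure (forall_mem_image.2 fun L hL ↦ (hchernoff L hL).trans_eq ?_)
      continuousOn_const (g := fun y ↦ exp (-(m * V / z ^ 2) * y)) (by fun_prop)
      ((isLUB_hfun hx hx0).mem_closure (nonempty_Iic.image _))
    congr 1
    field_simp
    ring
  · calc exp (-(m * V / z ^ 2) * hfun (-ε / V))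
        ≤ exp (-(m * V / z ^ 2) * ((-ε / V) ^ 2 / 2)) := by
          rw [neg_mul, neg_mul]
          gcongr
          exact sq_div_two_le_hfun hx hx0
      _ = exp (-(m * ε ^ 2) / (2 * z ^ 2 * V)) := by congr 1; field_simp

end WimpyVariance

end

theorem stmt_11 {X : Type*} [MeasurableSpace X] {ι : Type*} [Countable ι]
    (f : ι → X → ℝ) (a b : ℝ) (ha : a ≤ 0) (hb : 0 < b)
    (hmeas : ∀ l : ι, Measurable (f l))
    (hrange : ∀ (l : ι) (x : X), f l x ∈ Set.Icc a b)
    (hzero : ∃ l₀ : ι, ∀ x : X, f l₀ x = 0)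
    (μ : Measure X) [IsProbabilityMeasure μ] (m : ℕ) (hm : 0 < m)
    (ε : ℝ) (hε0 : 0 < ε) (hε : ε ≤ wimpyVar f μ) :
    ((Measure.pi fun _ : Fin m => μ)
        {S : Fin m → X | wimpyVar f μ ≥ sigma2hat f S + ε}).toReal ≤
      Real.exp (-((m : ℝ) * wimpyVar f μ / (max |a| |b|) ^ 2) *
        hfun (-ε / wimpyVar f μ)) ∧
    Real.exp (-((m : ℝ) * wimpyVar f μ / (max |a| |b|) ^ 2) *
        hfun (-ε / wimpyVar f μ)) ≤
      Real.exp (-((m : ℝ) * ε ^ 2) / (2 * (max |a| |b|) ^ 2 * wimpyVar f μ)) := by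
  have : Nonempty ι := hzero.nonempty
  exact stmt_11_general (lt_max_of_lt_right (abs_pos.2 hb.ne')) (fun l ↦ (hmeas l).aemeasurable)
    (fun l x ↦ abs_le_max_abs_abs (hrange l x).1 (hrange l x).2) hm hε0 hε
end
end

section
/- Let S = (s_1,…,s_m) be m i.i.d. samples from μ and let δ ∈ (0,1). With probability at least 1 − δ over S, σ²_F ≤ σ̂²_F(S) + z² ln(1/δ)/m + sqrt( ( z² ln(1/δ)/m )² + 2 z² σ̂²_F(S) ln(1/δ)/m ). -/
open MeasureTheory

noncomputable section

/-!
Since `σ̂²_F(S)` dominates the empirical second moment of each member of the class and the upper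
confidence limit is increasing in it, the event that the limit computed from `σ̂²_F(S)` falls below
`E[f²]` has probability at most `δ` for every single `f`: a one-sided Bernstein inequality for the
i.i.d. variables `f(s_i)² ∈ [0, z²]` suffices, because nonnegative variables have sub-Gaussian lower
tails with variance proxy `∑ E[X_i²]`. Along a sequence of `f` with `E[f²]` increasing to `σ²_F`
these events increase to the event that the limit falls below `σ²_F`, so continuity of the
measure from below transfers the bound without a union bound.
-/

section LowerTail

open ProbabilityTheory

lemma exp_neg_le_one_sub_add_sq_div_two {x : ℝ} (hx : 0 ≤ x) :
    Real.exp (-x) ≤ 1 - x + x ^ 2 / 2 := by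
  have hpos : 0 ≤ 1 - x + x ^ 2 / 2 := by nlinarith [sq_nonneg (x - 1)]
  rw [Real.exp_neg, inv_le_iff_one_le_mul₀ (Real.exp_pos x)]
  calc (1 : ℝ) ≤ 1 + x ^ 4 / 4 := le_add_of_nonneg_right (by positivity)
    _ = (1 - x + x ^ 2 / 2) * (1 + x + x ^ 2 / 2) := by ring
    _ ≤ (1 - x + x ^ 2 / 2) * Real.exp x :=
        mul_le_mul_of_nonneg_left (Real.quadratic_le_exp_of_nonneg hx) hpos

variable {Ω : Type*} [MeasurableSpace Ω] {P : Measure Ω}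

lemma integrable_exp_neg_mul_of_nonneg [IsFiniteMeasure P] {X : Ω → ℝ} (hX : AEMeasurable X P)
    (hX_nonneg : 0 ≤ᵐ[P] X) {t : ℝ} (ht : 0 ≤ t) :
    Integrable (fun ω => Real.exp (-t * X ω)) P := by
  simpa only [Pi.neg_apply, neg_mul, mul_neg] using
    integrable_exp_mul_of_le t 0 ht hX.neg (hX_nonneg.mono fun ω => neg_nonpos.2)

lemma mgf_neg_le_of_nonneg [IsProbabilityMeasure P] {X : Ω → ℝ} (hX : MemLp X 2 P)
    (hX_nonneg : 0 ≤ᵐ[P] X) {t : ℝ} (ht : 0 ≤ t) :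
    mgf X P (-t) ≤ Real.exp (-t * P[X] + t ^ 2 / 2 * P[X ^ 2]) := by
  have hX_int : Integrable (fun ω => 1 - t * X ω) P :=
    (integrable_const 1).sub ((hX.integrable one_le_two).const_mul t)
  have hX_sq : Integrable (fun ω => t ^ 2 / 2 * X ω ^ 2) P := hX.integrable_sq.const_mul _
  calc mgf X P (-t) ≤ ∫ ω, (1 - t * X ω + t ^ 2 / 2 * X ω ^ 2) ∂P := by
        refine integral_mono_ae
          (integrable_exp_neg_mul_of_nonneg hX.aestronglyMeasurable.aemeasurable hX_nonneg ht)
          (hX_int.add hX_sq) ?_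
        filter_upwards [hX_nonneg] with ω hω
        simpa only [neg_mul, mul_pow, mul_div_right_comm] using
          exp_neg_le_one_sub_add_sq_div_two (mul_nonneg ht hω)
    _ = (-t * P[X] + t ^ 2 / 2 * P[X ^ 2]) + 1 := by
        rw [integral_add hX_int hX_sq, integral_sub (integrable_const 1)
          ((hX.integrable one_le_two).const_mul t), integral_const_mul, integral_const_mul]
        simp only [integral_const, probReal_univ, one_smul, Pi.pow_apply]
        ring
    _ ≤ _ := Real.add_one_le_exp _

lemma mgf_neg_sum_le_of_nonneg {κ : Type*} {X : κ → Ω → ℝ} (hX_indep : iIndepFun X P)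
    (hX : ∀ i, MemLp (X i) 2 P) (hX_nonneg : ∀ i, 0 ≤ᵐ[P] X i) (s : Finset κ) {t : ℝ}
    (ht : 0 ≤ t) :
    mgf (∑ i ∈ s, X i) P (-t) ≤
      Real.exp (-t * ∑ i ∈ s, P[X i] + t ^ 2 / 2 * ∑ i ∈ s, P[X i ^ 2]) := by
  have := hX_indep.isProbabilityMeasure
  rw [hX_indep.mgf_sum₀ (fun i => (hX i).aestronglyMeasurable.aemeasurable), Finset.mul_sum,
    Finset.mul_sum, ← Finset.sum_add_distrib, Real.exp_sum]
  exact Finset.prod_le_prod (fun _ _ => mgf_nonneg)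
    fun i _ => mgf_neg_le_of_nonneg (hX i) (hX_nonneg i) ht

lemma measureReal_sum_le_sub_le_of_nonneg {κ : Type*} {X : κ → Ω → ℝ} (hX_indep : iIndepFun X P)
    (hX : ∀ i, MemLp (X i) 2 P) (hX_nonneg : ∀ i, 0 ≤ᵐ[P] X i) (s : Finset κ) {v ε : ℝ}
    (hv : ∑ i ∈ s, P[X i ^ 2] ≤ v) (hε : 0 ≤ ε) :
    P.real {ω | ∑ i ∈ s, X i ω ≤ ∑ i ∈ s, P[X i] - ε} ≤ Real.exp (-ε ^ 2 / (2 * v)) := by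
  have := hX_indep.isProbabilityMeasure
  have hv_nonneg : 0 ≤ v :=
    (Finset.sum_nonneg fun i _ => integral_nonneg fun ω => sq_nonneg (X i ω)).trans hv
  -- The minimiser of the Chernoff exponent `-t ε + t² v / 2`.
  set t := ε / v with ht_def
  have ht : 0 ≤ t := div_nonneg hε hv_nonneg
  have h_exp_int : Integrable (fun ω => Real.exp (-t * (∑ i ∈ s, X i) ω)) P := by
    refine integrable_exp_neg_mul_of_nonneg
      (Finset.aemeasurable_sum s fun i _ => (hX i).aestronglyMeasurable.aemeasurable) ?_ ht
    filter_upwards [(ae_ball_iff s.countable_toSet).2 fun i _ => hX_nonneg i] with ω hω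
    simpa only [Finset.sum_apply, Pi.zero_apply] using Finset.sum_nonneg hω
  calc P.real {ω | ∑ i ∈ s, X i ω ≤ ∑ i ∈ s, P[X i] - ε}
      ≤ Real.exp (t * (∑ i ∈ s, P[X i] - ε)) * mgf (∑ i ∈ s, X i) P (-t) := by
        simpa only [neg_neg, Finset.sum_apply] using
          measure_le_le_exp_mul_mgf (∑ i ∈ s, P[X i] - ε) (neg_nonpos.2 ht) h_exp_int
    _ ≤ Real.exp (t * (∑ i ∈ s, P[X i] - ε)) *
          Real.exp (-t * ∑ i ∈ s, P[X i] + t ^ 2 / 2 * v) := by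
        gcongr
        refine (mgf_neg_sum_le_of_nonneg hX_indep hX hX_nonneg s ht).trans ?_
        gcongr
    _ = Real.exp (-(t * ε) + t ^ 2 / 2 * v) := by
        rw [← Real.exp_add]
        ring_nf
    _ = Real.exp (-ε ^ 2 / (2 * v)) := by
        congr 1
        rcases hv_nonneg.eq_or_lt with rfl | hv_pos
        · simp only [ht_def, div_zero, zero_mul, mul_zero, neg_zero, add_zero]
        · rw [ht_def]
          field_simp
          ring

lemma measureReal_pi_sum_le_sub_le_of_nonneg {κ : Type*} [Fintype κ] [IsProbabilityMeasure P]
    {g : Ω → ℝ} (hg : MemLp g 2 P) (hg_nonneg : 0 ≤ᵐ[P] g) {v ε : ℝ} (hv : P[g ^ 2] ≤ v)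
    (hε : 0 ≤ ε) :
    (Measure.pi fun _ : κ => P).real {S | ∑ k, g (S k) ≤ Fintype.card κ * (P[g] - ε)} ≤
      Real.exp (-(Fintype.card κ * ε ^ 2) / (2 * v)) := by
  set n : ℝ := (Fintype.card κ : ℝ) with hn
  have h_eval (k : κ) := measurePreserving_eval (fun _ : κ => P) k
  have h_mean (k : κ) : ∫ S : κ → Ω, g (S k) ∂(Measure.pi fun _ => P) = P[g] :=
    integral_comp_eval (μ := fun _ : κ => P) hg.aestronglyMeasurable
  have h_sq (k : κ) : ∫ S : κ → Ω, g (S k) ^ 2 ∂(Measure.pi fun _ => P) = P[g ^ 2] :=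
    integral_comp_eval (μ := fun _ : κ => P) (hg.aestronglyMeasurable.pow 2)
  have h_proxy : ∑ k : κ, ∫ S : κ → Ω, g (S k) ^ 2 ∂(Measure.pi fun _ => P) ≤ n * v := by
    simp only [h_sq, Finset.sum_const, Finset.card_univ, nsmul_eq_mul]
    gcongr
  have h := measureReal_sum_le_sub_le_of_nonneg (P := Measure.pi fun _ : κ => P)
    (X := fun k S => g (S k)) (iIndepFun_pi fun _ => hg.aestronglyMeasurable.aemeasurable)
    (fun k => hg.comp_measurePreserving (h_eval k))
    (fun k => (h_eval k).quasiMeasurePreserving.ae hg_nonneg) Finset.univ h_proxy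
    (ε := n * ε) (by positivity)
  simp only [h_mean, Finset.sum_const, Finset.card_univ, nsmul_eq_mul, ← hn, ← mul_sub] at h
  refine h.trans_eq ?_
  rcases isEmpty_or_nonempty κ with _ | _
  · simp [hn]
  · congr 1
    field_simp

end LowerTail

section UpperConfidenceLimit

/-- The larger root `v` of `(v - y)² = 2 r v`, which is the largest mean compatible with an observed
average `y` when averages fall short of their mean `v` by at most `√(2 r v)`. -/
def upperConfidenceLimit (r y : ℝ) : ℝ :=
  y + r + √(r ^ 2 + 2 * r * y)

lemma upperConfidenceLimit_nonneg {r y : ℝ} (hr : 0 ≤ r) (hy : 0 ≤ y) :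
    0 ≤ upperConfidenceLimit r y := by
  unfold upperConfidenceLimit
  positivity

lemma upperConfidenceLimit_mono {r : ℝ} (hr : 0 ≤ r) : Monotone (upperConfidenceLimit r) := by
  intro y y' hy
  unfold upperConfidenceLimit
  gcongr

lemma le_sub_sqrt_of_upperConfidenceLimit_lt {r y v : ℝ} (hr : 0 ≤ r)
    (h : upperConfidenceLimit r y < v) : y ≤ v - √(2 * r * v) := by
  have h_sqrt : √(r ^ 2 + 2 * r * y) < v - y - r := by
    unfold upperConfidenceLimit at h
    linarith
  have h_pos : 0 < v - y - r := (Real.sqrt_nonneg _).trans_lt h_sqrt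
  have h_sq : r ^ 2 + 2 * r * y < (v - y - r) ^ 2 := (Real.sqrt_lt' h_pos).1 h_sqrt
  have h_dev : √(2 * r * v) ≤ v - y := Real.sqrt_le_iff.2 ⟨by linarith, by nlinarith⟩
  linarith

variable {X : Type*} [MeasurableSpace X] {μ : Measure X}

lemma integral_sq_le_mul_integral [IsFiniteMeasure μ] {g : X → ℝ} (hg : AEMeasurable g μ) {c : ℝ}
    (hgc : ∀ᵐ x ∂μ, g x ∈ Set.Icc 0 c) : ∫ x, g x ^ 2 ∂μ ≤ c * ∫ x, g x ∂μ := by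
  have hg_Lp : MemLp g 2 μ := memLp_of_bounded hgc hg.aestronglyMeasurable 2
  rw [← integral_const_mul]
  refine integral_mono_ae hg_Lp.integrable_sq ((hg_Lp.integrable one_le_two).const_mul c) ?_
  filter_upwards [hgc] with x hx
  simpa only [sq] using mul_le_mul_of_nonneg_right hx.2 hx.1

lemma measureReal_upperConfidenceLimit_lt_integral_le [IsProbabilityMeasure μ] {κ : Type*}
    [Fintype κ] [Nonempty κ] {g : X → ℝ} (hg : AEMeasurable g μ) {c : ℝ}
    (hgc : ∀ᵐ x ∂μ, g x ∈ Set.Icc 0 c) {L : ℝ} (hL : 0 ≤ L) :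
    (Measure.pi fun _ : κ => μ).real {S | upperConfidenceLimit (c * L / Fintype.card κ)
      ((Fintype.card κ : ℝ)⁻¹ * ∑ k, g (S k)) < ∫ x, g x ∂μ} ≤ Real.exp (-L) := by
  have hg_Lp : MemLp g 2 μ := memLp_of_bounded hgc hg.aestronglyMeasurable 2
  set r := c * L / Fintype.card κ with hr_def
  set e := ∫ x, g x ∂μ
  obtain ⟨he_nonneg, hec⟩ : e ∈ Set.Icc 0 c :=
    (convex_Icc 0 c).integral_mem isClosed_Icc hgc (hg_Lp.integrable one_le_two)
  have hc : 0 ≤ c := he_nonneg.trans hec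
  have hr : 0 ≤ r := by positivity
  rcases he_nonneg.eq_or_lt with he | he
  · have h_sample_nonneg : ∀ᵐ S ∂(Measure.pi fun _ : κ => μ), ∀ k, 0 ≤ g (S k) :=
      ae_all_iff.2 fun k => (measurePreserving_eval (fun _ : κ => μ) k).quasiMeasurePreserving.ae
        (hgc.mono fun x hx => hx.1)
    refine ((measureReal_eq_zero_iff (measure_ne_top _ _)).2
      (measure_eq_zero_iff_ae_notMem.2 ?_)).trans_le (Real.exp_pos _).le
    filter_upwards [h_sample_nonneg] with S hS
    exact Set.notMem_ofPred_iff.2 (not_lt.2 (he.symm.le.trans (upperConfidenceLimit_nonneg hr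
      (mul_nonneg (by positivity) (Finset.sum_nonneg fun k _ => hS k)))))
  · have hc_pos : 0 < c := he.trans_le hec
    calc (Measure.pi fun _ : κ => μ).real
          {S | upperConfidenceLimit r ((Fintype.card κ : ℝ)⁻¹ * ∑ k, g (S k)) < e}
        ≤ (Measure.pi fun _ : κ => μ).real
            {S | ∑ k, g (S k) ≤ Fintype.card κ * (e - √(2 * r * e))} := by
          refine measureReal_mono fun S hS => ?_
          have h := le_sub_sqrt_of_upperConfidenceLimit_lt hr hS
          rwa [inv_mul_le_iff₀ (by positivity)] at h
      _ ≤ Real.exp (-(Fintype.card κ * √(2 * r * e) ^ 2) / (2 * (c * e))) :=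
          measureReal_pi_sum_le_sub_le_of_nonneg hg_Lp (hgc.mono fun x hx => hx.1)
            (integral_sq_le_mul_integral hg hgc) (Real.sqrt_nonneg _)
      _ = Real.exp (-L) := by
          rw [Real.sq_sqrt (by positivity), hr_def]
          congr 1
          field_simp

end UpperConfidenceLimit

section Supremum

lemma measure_lt_le_of_isLUB {Ω α : Type*} [MeasurableSpace Ω] {P : Measure Ω} [LinearOrder α]
    [TopologicalSpace α] [OrderTopology α] [FirstCountableTopology α] {s : Set α} {v : α}
    (hv : IsLUB s v) (hs : s.Nonempty) {T : Ω → α} {C : ENNReal}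
    (hT : ∀ u ∈ s, P {ω | T ω < u} ≤ C) : P {ω | T ω < v} ≤ C := by
  obtain ⟨u, hu_mono, -, hu_tendsto, hu_mem⟩ := hv.exists_seq_monotone_tendsto hs
  have h_union : {ω | T ω < v} ⊆ ⋃ n, {ω | T ω < u n} := fun ω hω =>
    Set.mem_iUnion.2 (hu_tendsto.eventually_const_lt hω).exists
  have h_mono : Monotone fun n => {ω | T ω < u n} := fun _ _ hn _ hω => hω.trans_le (hu_mono hn)
  calc P {ω | T ω < v} ≤ P (⋃ n, {ω | T ω < u n}) := measure_mono h_union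
    _ = ⨆ n, P {ω | T ω < u n} := h_mono.measure_iUnion
    _ ≤ C := iSup_le fun n => hT (u n) (hu_mem n)

lemma one_sub_measureReal_le_measureReal_compl {Ω : Type*} [MeasurableSpace Ω] (P : Measure Ω)
    [IsProbabilityMeasure P] (s : Set Ω) : 1 - P.real s ≤ P.real sᶜ := by
  have h := measureReal_union_le (μ := P) s sᶜ
  rw [Set.union_compl_self, probReal_univ] at h
  linarith

variable {X ι : Type*} {f : ι → X → ℝ} {z : ℝ}

lemma inv_mul_sum_sq_le_sigma2hat (hf : ∀ l x, |f l x| ≤ z) {m : ℕ} (S : Fin m → X) (l : ι) :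
    (m : ℝ)⁻¹ * ∑ k, f l (S k) ^ 2 ≤ sigma2hat f S := by
  have h_bdd : BddAbove (Set.range fun l => ∑ k, f l (S k) ^ 2) :=
    ⟨∑ _k : Fin m, z ^ 2, Set.forall_mem_range.2 fun l =>
      Finset.sum_le_sum fun k _ => sq_le_sq.2 ((hf l (S k)).trans (le_abs_self z))⟩
  exact mul_le_mul_of_nonneg_left (le_ciSup h_bdd l) (by positivity)

variable [MeasurableSpace X] {μ : Measure X} [IsProbabilityMeasure μ]

lemma isLUB_wimpyVar [Nonempty ι] (hf : ∀ l x, |f l x| ≤ z) :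
    IsLUB (Set.range fun l => ∫ x, f l x ^ 2 ∂μ) (wimpyVar f μ) := by
  refine isLUB_ciSup ⟨z ^ 2, Set.forall_mem_range.2 fun l => ?_⟩
  calc ∫ x, f l x ^ 2 ∂μ ≤ ∫ _, z ^ 2 ∂μ :=
        integral_mono_of_nonneg (ae_of_all _ fun x => sq_nonneg (f l x)) (integrable_const _)
          (ae_of_all _ fun x => sq_le_sq.2 ((hf l x).trans (le_abs_self z)))
    _ = z ^ 2 := by simp only [integral_const, probReal_univ, one_smul]

lemma measureReal_upperConfidenceLimit_sigma2hat_lt_wimpyVar_le [Nonempty ι]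
    (hf_meas : ∀ l, AEMeasurable (f l) μ) (hf : ∀ l x, |f l x| ≤ z) {m : ℕ} (hm : 0 < m) {L : ℝ}
    (hL : 0 ≤ L) :
    (Measure.pi fun _ : Fin m => μ).real
      {S | upperConfidenceLimit (z ^ 2 * L / m) (sigma2hat f S) < wimpyVar f μ} ≤
      Real.exp (-L) := by
  have : Nonempty (Fin m) := Fin.pos_iff_nonempty.1 hm
  refine ENNReal.toReal_le_of_le_ofReal (Real.exp_pos _).le
    (measure_lt_le_of_isLUB (isLUB_wimpyVar hf) (Set.range_nonempty _)
      (Set.forall_mem_range.2 fun l => ?_))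
  rw [ENNReal.le_ofReal_iff_toReal_le (measure_ne_top _ _) (Real.exp_pos _).le]
  have h_single := measureReal_upperConfidenceLimit_lt_integral_le (κ := Fin m)
    ((hf_meas l).pow_const 2)
    (ae_of_all _ fun x => ⟨sq_nonneg _, sq_le_sq.2 ((hf l x).trans (le_abs_self z))⟩) hL
  rw [Fintype.card_fin] at h_single
  refine (measureReal_mono fun S hS => ?_).trans h_single
  exact (upperConfidenceLimit_mono (by positivity)
    (inv_mul_sum_sq_le_sigma2hat hf S l)).trans_lt hS

end Supremum

theorem stmt_12_general {X : Type*} [MeasurableSpace X] {ι : Type*} [Nonempty ι]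
    (f : ι → X → ℝ) (z : ℝ) (μ : Measure X) [IsProbabilityMeasure μ]
    (hmeas : ∀ l : ι, AEMeasurable (f l) μ) (hf : ∀ (l : ι) (x : X), |f l x| ≤ z)
    (m : ℕ) (hm : 0 < m) (δ : ℝ) (hδ : δ ∈ Set.Ioo (0 : ℝ) 1) :
    1 - δ ≤ ((Measure.pi fun _ : Fin m => μ)
        {S : Fin m → X | wimpyVar f μ ≤ sigma2hat f S + z ^ 2 * Real.log (1 / δ) / m +
          Real.sqrt ((z ^ 2 * Real.log (1 / δ) / m) ^ 2 +
            2 * z ^ 2 * sigma2hat f S * Real.log (1 / δ) / m)}).toReal := by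
  have hL : 0 ≤ Real.log (1 / δ) := (Real.log_pos (one_lt_one_div hδ.1 hδ.2)).le
  have hδL : Real.exp (-Real.log (1 / δ)) = δ := by
    rw [one_div, Real.log_inv, neg_neg, Real.exp_log hδ.1]
  set bad := {S : Fin m → X |
    upperConfidenceLimit (z ^ 2 * Real.log (1 / δ) / m) (sigma2hat f S) < wimpyVar f μ}
  calc 1 - δ ≤ 1 - (Measure.pi fun _ : Fin m => μ).real bad :=
        sub_le_sub_left ((measureReal_upperConfidenceLimit_sigma2hat_lt_wimpyVar_le
          hmeas hf hm hL).trans_eq hδL) 1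
    _ ≤ (Measure.pi fun _ : Fin m => μ).real badᶜ := one_sub_measureReal_le_measureReal_compl _ _
    _ ≤ _ := by
        refine measureReal_mono fun S hS => ?_
        have h : wimpyVar f μ ≤ upperConfidenceLimit _ _ := not_lt.1 (Set.notMem_ofPred_iff.1 hS)
        exact h.trans_eq (by rw [upperConfidenceLimit]; ring_nf)

theorem stmt_12 {X : Type*} [MeasurableSpace X] {ι : Type*} [Countable ι]
    (f : ι → X → ℝ) (a b : ℝ) (ha : a ≤ 0) (hb : 0 < b)
    (hmeas : ∀ l : ι, Measurable (f l))
    (hrange : ∀ (l : ι) (x : X), f l x ∈ Set.Icc a b)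
    (hzero : ∃ l₀ : ι, ∀ x : X, f l₀ x = 0)
    (μ : Measure X) [IsProbabilityMeasure μ] (m : ℕ) (hm : 0 < m)
    (δ : ℝ) (hδ : δ ∈ Set.Ioo (0 : ℝ) 1) :
    1 - δ ≤ ((Measure.pi fun _ : Fin m => μ)
        {S : Fin m → X | wimpyVar f μ ≤ sigma2hat f S +
          (max |a| |b|) ^ 2 * Real.log (1 / δ) / m +
          Real.sqrt (((max |a| |b|) ^ 2 * Real.log (1 / δ) / m) ^ 2 +
            2 * (max |a| |b|) ^ 2 * sigma2hat f S * Real.log (1 / δ) / m)}).toReal := by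
  have : Nonempty ι := hzero.nonempty
  exact stmt_12_general f _ μ (fun l => (hmeas l).aemeasurable)
    (fun l x => abs_le_max_abs_abs (hrange l x).1 (hrange l x).2) m hm δ hδ
end
end

section
/- Assume c = b − a ≤ 1. Define g : X^m → ℝ by g(S) = m·SD⁺(F,S) = sup_{f∈F} { Σ_{i=1}^m f(s_i) − m E_μ[f] }, and for each i define g_i(S) = inf_{s'_i ∈ X} sup_{f∈F} { Σ_{j≠i} f(s_j) + f(s'_i) − m E_μ[f] }. Then for every S ∈ X^m and every i: 0 ≤ g(S) − g_i(S) ≤ 1, and Σ_{i=1}^m ( g(S) − g_i(S) ) ≤ g(S) + m η_F. That is, g is a (1, m η_F)-self-bounding function. -/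
/-!
Replacing `s_i` lowers the objective `Σ_k f(s_k) - m E_μ[f]` of a fixed `f` by at most
`f(s_i) - a`, so this objective is at most `g_i(S) + (f(s_i) - a)`. Since `f(s_i) - a ≤ b - a`,
taking the supremum over `f` gives `g - g_i ≤ b - a`. Summing over `i` instead gives
`m (Σ_k f(s_k) - m E_μ[f]) ≤ Σ_i g_i + Σ_i f(s_i) - m a ≤ Σ_i g_i + g + m η_F`,
and now the supremum over `f` turns the left-hand side into `m g`.
-/

open MeasureTheory

noncomputable section

theorem sum_sub_sum_update {κ X M : Type*} [Fintype κ] [DecidableEq κ] [AddCommGroup M]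
    (h : X → M) (S : κ → X) (i : κ) (x : X) :
    ∑ k, h (S k) - ∑ k, h (Function.update S i x k) = h (S i) - h x := by
  rw [← Finset.sum_sub_distrib, Fintype.sum_eq_single i, Function.update_self]
  intro k hk
  rw [Function.update_of_ne hk, sub_self]

section CoordInf

variable {κ X : Type*} [DecidableEq κ] {g : (κ → X) → ℝ} {S : κ → X} {i : κ}

/-- The infimum of `g` over all ways of replacing the `i`-th coordinate of `S`. This is the function
`g_i` associated with `g` in the theory of self-bounding functions; `gSDpi` unfolds to it. -/
def coordInf (g : (κ → X) → ℝ) (S : κ → X) (i : κ) : ℝ :=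
  ⨅ x : X, g (Function.update S i x)

theorem coordInf_le (hg : BddBelow (Set.range fun x => g (Function.update S i x))) :
    coordInf g S i ≤ g S :=
  (ciInf_le hg (S i)).trans_eq (by rw [Function.update_eq_self])

end CoordInf

section SupCenteredSum

variable {ι κ X : Type*} [Fintype κ] {f : ι → X → ℝ} {t : ι → ℝ} {a b : ℝ}

/-- The supremum over `l` of the sums of `f l` over the sample `S`, centered at `t l`.
The function `gSDp` unfolds to the case where `t l` is the expectation of the sum. -/
def supCenteredSum (f : ι → X → ℝ) (t : ι → ℝ) (S : κ → X) : ℝ :=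
  ⨆ l, (∑ k, f l (S k) - t l)

theorem bddAbove_range_centeredSum (hf : ∀ l x, f l x ≤ b) (ht : BddBelow (Set.range t))
    (S : κ → X) : BddAbove (Set.range fun l => ∑ k, f l (S k) - t l) := by
  obtain ⟨c, hc⟩ := ht
  refine ⟨Fintype.card κ • b - c, Set.forall_mem_range.2 fun l => ?_⟩
  exact sub_le_sub (Finset.sum_le_card_nsmul _ _ b fun k _ => hf l (S k))
    (hc (Set.mem_range_self l))

theorem centeredSum_le_supCenteredSum (hf : ∀ l x, f l x ≤ b) (ht : BddBelow (Set.range t))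
    (S : κ → X) (l : ι) : ∑ k, f l (S k) - t l ≤ supCenteredSum f t S :=
  le_ciSup (bddAbove_range_centeredSum hf ht S) l

variable [DecidableEq κ]

theorem centeredSum_sub_le_supCenteredSum_update (hf : ∀ l x, f l x ∈ Set.Icc a b)
    (ht : BddBelow (Set.range t)) (S : κ → X) (i : κ) (x : X) (l : ι) :
    ∑ k, f l (S k) - t l - (f l (S i) - a) ≤ supCenteredSum f t (Function.update S i x) := by
  have hsup := centeredSum_le_supCenteredSum (fun l x => (hf l x).2) ht (Function.update S i x) l
  have hdiff := sum_sub_sum_update (f l) S i x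
  linarith [(hf l x).1]

theorem coordInf_supCenteredSum_le [Nonempty ι] (hf : ∀ l x, f l x ∈ Set.Icc a b)
    (ht : BddBelow (Set.range t)) (S : κ → X) (i : κ) :
    coordInf (supCenteredSum f t) S i ≤ supCenteredSum f t S := by
  obtain ⟨l⟩ := ‹Nonempty ι›
  exact coordInf_le ⟨_, Set.forall_mem_range.2 fun x =>
    centeredSum_sub_le_supCenteredSum_update hf ht S i x l⟩

variable [Nonempty X]

theorem centeredSum_le_coordInf_add (hf : ∀ l x, f l x ∈ Set.Icc a b)
    (ht : BddBelow (Set.range t)) (S : κ → X) (i : κ) (l : ι) :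
    ∑ k, f l (S k) - t l ≤ coordInf (supCenteredSum f t) S i + (f l (S i) - a) :=
  sub_le_iff_le_add.1 <|
    le_ciInf fun x => centeredSum_sub_le_supCenteredSum_update hf ht S i x l

theorem supCenteredSum_sub_coordInf_le [Nonempty ι] (hf : ∀ l x, f l x ∈ Set.Icc a b)
    (ht : BddBelow (Set.range t)) (S : κ → X) (i : κ) :
    supCenteredSum f t S - coordInf (supCenteredSum f t) S i ≤ b - a := by
  refine sub_le_iff_le_add'.2 (ciSup_le fun l => ?_)
  linarith [centeredSum_le_coordInf_add hf ht S i l, (hf l (S i)).2]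

theorem sum_supCenteredSum_sub_coordInf_le [Nonempty ι] {T : ℝ} (hf : ∀ l x, f l x ∈ Set.Icc a b)
    (ht : BddBelow (Set.range t)) (hT : ∀ l, t l ≤ T) (S : κ → X) :
    ∑ i, (supCenteredSum f t S - coordInf (supCenteredSum f t) S i)
      ≤ supCenteredSum f t S + (T - Fintype.card κ * a) := by
  set g : (κ → X) → ℝ := supCenteredSum f t
  have hl (l : ι) : Fintype.card κ * (∑ k, f l (S k) - t l)
      ≤ ∑ i, coordInf g S i + (g S + (T - Fintype.card κ * a)) :=
    calc Fintype.card κ * (∑ k, f l (S k) - t l)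
      _ = ∑ _i : κ, (∑ k, f l (S k) - t l) := by
        rw [Finset.sum_const, Finset.card_univ, nsmul_eq_mul]
      _ ≤ ∑ i, (coordInf g S i + (f l (S i) - a)) :=
        Finset.sum_le_sum fun i _ => centeredSum_le_coordInf_add hf ht S i l
      _ = ∑ i, coordInf g S i + ((∑ k, f l (S k) - t l) + (t l - Fintype.card κ * a)) := by
        simp [Finset.sum_add_distrib]
      _ ≤ ∑ i, coordInf g S i + (g S + (T - Fintype.card κ * a)) := by
        gcongr
        exacts [centeredSum_le_supCenteredSum (fun l x => (hf l x).2) ht S l, hT l]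
  have hsup : Fintype.card κ * g S
      ≤ ∑ i, coordInf g S i + (g S + (T - Fintype.card κ * a)) :=
    (Real.mul_iSup_of_nonneg (Nat.cast_nonneg _) _).trans_le (ciSup_le hl)
  rw [Finset.sum_sub_distrib, Finset.sum_const, Finset.card_univ, nsmul_eq_mul]
  exact sub_le_iff_le_add'.2 hsup

end SupCenteredSum

theorem integral_mem_Icc_of_forall_mem {X : Type*} [MeasurableSpace X] {μ : Measure X}
    [IsProbabilityMeasure μ] {h : X → ℝ} {a b : ℝ} (hm : AEMeasurable h μ)
    (hh : ∀ x, h x ∈ Set.Icc a b) : ∫ x, h x ∂μ ∈ Set.Icc a b :=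
  (convex_Icc a b).integral_mem isClosed_Icc (.of_forall hh)
    (.of_mem_Icc a b hm (.of_forall hh))

theorem stmt_13_general {X ι : Type*} [MeasurableSpace X] [Nonempty ι] {f : ι → X → ℝ} {a b : ℝ}
    (μ : Measure X) [IsProbabilityMeasure μ] (hmeas : ∀ l, AEMeasurable (f l) μ)
    (hrange : ∀ l x, f l x ∈ Set.Icc a b) (m : ℕ) :
    (∀ (S : Fin m → X) (i : Fin m),
        0 ≤ gSDp f μ S - gSDpi f μ S i ∧ gSDp f μ S - gSDpi f μ S i ≤ b - a) ∧
    ∀ S : Fin m → X,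
      ∑ i : Fin m, (gSDp f μ S - gSDpi f μ S i) ≤ gSDp f μ S + (m : ℝ) * etaF f μ a := by
  have : Nonempty X := nonempty_of_isProbabilityMeasure μ
  have hE (l : ι) : ∫ x, f l x ∂μ ∈ Set.Icc a b :=
    integral_mem_Icc_of_forall_mem (hmeas l) (hrange l)
  have hbelow : BddBelow (Set.range fun l => (m : ℝ) * ∫ x, f l x ∂μ) :=
    ⟨m * a, Set.forall_mem_range.2 fun l => by gcongr; exact (hE l).1⟩
  have habove (l : ι) : (m : ℝ) * ∫ x, f l x ∂μ ≤ m * ⨆ l, ∫ x, f l x ∂μ := by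
    gcongr
    exact le_ciSup (f := fun l => ∫ x, f l x ∂μ) ⟨b, Set.forall_mem_range.2 fun l => (hE l).2⟩ l
  refine ⟨fun S i => ⟨sub_nonneg.2 (coordInf_supCenteredSum_le hrange hbelow S i),
    supCenteredSum_sub_coordInf_le hrange hbelow S i⟩, fun S => ?_⟩
  refine (sum_supCenteredSum_sub_coordInf_le hrange hbelow habove S).trans_eq ?_
  rw [etaF, mul_sub, Fintype.card_fin, gSDp, supCenteredSum]

theorem stmt_13 {X : Type*} [MeasurableSpace X] {ι : Type*} [Countable ι]
    (f : ι → X → ℝ) (a b : ℝ) (ha : a ≤ 0) (hb : 0 < b)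
    (hmeas : ∀ l : ι, Measurable (f l))
    (hrange : ∀ (l : ι) (x : X), f l x ∈ Set.Icc a b)
    (hzero : ∃ l₀ : ι, ∀ x : X, f l₀ x = 0)
    (μ : Measure X) [IsProbabilityMeasure μ] (hc : b - a ≤ 1) (m : ℕ) :
    (∀ (S : Fin m → X) (i : Fin m),
        0 ≤ gSDp f μ S - gSDpi f μ S i ∧ gSDp f μ S - gSDpi f μ S i ≤ 1) ∧
    ∀ S : Fin m → X,
      ∑ i : Fin m, (gSDp f μ S - gSDpi f μ S i) ≤ gSDp f μ S + (m : ℝ) * etaF f μ a := by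
  have : Nonempty ι := hzero.nonempty
  have ⟨hdiff, hsum⟩ := stmt_13_general μ (fun l => (hmeas l).aemeasurable) hrange m
  exact ⟨fun S i => (hdiff S i).imp_right (·.trans hc), hsum⟩
end
end
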